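/- arXiv:1907.05455 — 2 statements merged into one kernel-verified Lean document; each statement's English description precedes it below -/
import Mathlib

section
/- Let D be a pseudoconvex domain in ℂ^N and let (D_n) be an exhaustion of D by strictly pseudoconvex domains that are 𝒪(D)-convex (i.e., each closure cl(D_n) is a compact 𝒪(D)-convex subset of D_{n+1} and ⋃_n D_n = D). Let (M_n) be a sequence of positive numbers. Then there exist compact sets Γ_n ⊆ D_{n+1} \ cl(D_n) such that cl(D_n) ∪ Γ_n ∪ Γ_{n+1} ∪ ⋯ ∪ Γ_m is 𝒪(D)-convex for every m ≥ n, and every continuous path connecting bD_n to bD_{n+1} and omitting Γ_n has length (total variation) greater than M_n. -/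
open Set Filter Topology Metric MeasureTheory
open scoped ENNReal NNReal InnerProductSpace ComplexConjugate

noncomputable section

/-- `ℂ^N` with the Euclidean structure. -/
abbrev EN (N : ℕ) := EuclideanSpace ℂ (Fin N)

instance {N : ℕ} : MeasurableSpace (EN N) := borel _
instance {N : ℕ} : BorelSpace (EN N) := ⟨rfl⟩

/-- A domain: a nonempty open connected subset. -/
def IsDomainSet {N : ℕ} (D : Set (EN N)) : Prop := IsOpen D ∧ IsConnected D

/-- `u` is plurisubharmonic on `D`: upper semicontinuous on `D`, and its restriction to
every complex affine line satisfies the sub-mean value inequality on every closed disc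
(of that line) contained in `D`. -/
def PlurisubharmonicOn {N : ℕ} (u : EN N → ℝ) (D : Set (EN N)) : Prop :=
  UpperSemicontinuousOn u D ∧
  ∀ (a b : EN N) (t₀ : ℂ) (r : ℝ), 0 < r →
    (fun t : ℂ => a + t • b) '' Metric.closedBall t₀ r ⊆ D →
    u (a + t₀ • b) ≤ (2 * Real.pi)⁻¹ *
      ∫ θ in (0:ℝ)..(2 * Real.pi), u (a + (t₀ + r * Complex.exp (θ * Complex.I)) • b)

/-- `D` is a pseudoconvex domain: a domain carrying a continuous plurisubharmonic
exhaustion function. -/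
def Pseudoconvex {N : ℕ} (D : Set (EN N)) : Prop :=
  IsDomainSet D ∧ ∃ u : EN N → ℝ, ContinuousOn u D ∧ PlurisubharmonicOn u D ∧
    ∀ c : ℝ, IsCompact (closure {z ∈ D | u z < c}) ∧ closure {z ∈ D | u z < c} ⊆ D

/-- The space `𝒪(D)` of holomorphic functions on `D`, as a submodule of `ℂ^N → ℂ`. -/
def Hol {N : ℕ} (D : Set (EN N)) : Submodule ℂ (EN N → ℂ) where
  carrier := {f | DifferentiableOn ℂ f D}
  add_mem' hf hg := hf.add hg
  zero_mem' := differentiableOn_const 0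
  smul_mem' c f hf := hf.const_smul c

/-- The topology of uniform convergence on compact subsets of `D`, on `𝒪(D)`. -/
instance holTopology {N : ℕ} (D : Set (EN N)) : TopologicalSpace ↥(Hol D) :=
  TopologicalSpace.induced
    (fun f => UniformOnFun.ofFun {K : Set (EN N) | K ⊆ D ∧ IsCompact K} f.1)
    inferInstance

/-- A set is residual if it contains a dense `G_δ` set. -/
def ResidualIn {X : Type*} [TopologicalSpace X] (S : Set X) : Prop :=
  ∃ T : Set X, T ⊆ S ∧ IsGδ T ∧ Dense T

/-- `S` is densely lineable: `S ∪ {0}` contains a dense vector subspace. -/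
def DenselyLineableIn {X : Type*} [TopologicalSpace X] [AddCommMonoid X] [Module ℂ X]
    (S : Set X) : Prop :=
  ∃ p : Submodule ℂ X, Dense (p : Set X) ∧ (p : Set X) ⊆ S ∪ {0}

/-- `S` is spaceable: `S ∪ {0}` contains a closed infinite-dimensional vector subspace. -/
def SpaceableIn {X : Type*} [TopologicalSpace X] [AddCommMonoid X] [Module ℂ X]
    (S : Set X) : Prop :=
  ∃ p : Submodule ℂ X, IsClosed (p : Set X) ∧ ¬ Module.Finite ℂ ↥p ∧ (p : Set X) ⊆ S ∪ {0}

/-- A finite length path to `bD`: continuous and piecewise `C¹` on `[0,1)`, with values in `D`,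
finite length (total variation), converging to a boundary point of `D` as `r → 1`. -/
def FiniteLengthPathTo {N : ℕ} (D : Set (EN N)) (γ : ℝ → EN N) : Prop :=
  MapsTo γ (Ico (0:ℝ) 1) D ∧ ContinuousOn γ (Ico (0:ℝ) 1) ∧
  (∃ u : ℕ → ℝ, u 0 = 0 ∧ StrictMono u ∧ (∀ n, u n < 1) ∧ Tendsto u atTop (𝓝 1) ∧
    ∀ n, ContDiffOn ℝ 1 γ (Icc (u n) (u (n+1)))) ∧
  eVariationOn γ (Ico (0:ℝ) 1) < ⊤ ∧
  ∃ ζ ∈ frontier D, Tendsto γ (𝓝[<] (1:ℝ)) (𝓝 ζ)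

/-- The set of `f ∈ 𝒪(D)` with maximal cluster set along every finite length path to `bD`. -/
def WildSet {N : ℕ} (D : Set (EN N)) : Set ↥(Hol D) :=
  {f | ∀ γ : ℝ → EN N, FiniteLengthPathTo D γ → ∀ c : ℂ,
    ∃ r : ℕ → ℝ, (∀ n, r n ∈ Ico (0:ℝ) 1) ∧ Tendsto r atTop (𝓝 1) ∧
      Tendsto (fun n => f.1 (γ (r n))) atTop (𝓝 c)}

/-- The `𝒪(D)`-hull of `K`. -/
def holHull {N : ℕ} (D K : Set (EN N)) : Set (EN N) :=
  {z ∈ D | ∀ φ : EN N → ℂ, DifferentiableOn ℂ φ D → ‖φ z‖ ≤ ⨆ w ∈ K, ‖φ w‖}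

/-- `K` is `𝒪(D)`-convex. -/
def HolConvexIn {N : ℕ} (D K : Set (EN N)) : Prop := K ⊆ D ∧ holHull D K = K

/-- The polynomial hull of a compact subset of `ℂ`. -/
def polyHull1 (E : Set ℂ) : Set ℂ :=
  {z | ∀ p : Polynomial ℂ, ‖p.eval z‖ ≤ ⨆ w ∈ E, ‖p.eval w‖}

/-- The polynomial hull of a subset of `ℂ^N`. -/
def polyHull {N : ℕ} (E : Set (EN N)) : Set (EN N) :=
  {z | ∀ p : MvPolynomial (Fin N) ℂ,
    ‖MvPolynomial.eval (fun j => z j) p‖ ≤ ⨆ w ∈ E, ‖MvPolynomial.eval (fun j => w j) p‖}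

/-- `E ⊆ ℂ^N` is polynomially convex. -/
def PolynomiallyConvex {N : ℕ} (E : Set (EN N)) : Prop := polyHull E = E

/-- The (real) Hessian of `ρ` at `p`, applied to the pair `(v, w)`. -/
def Hess {N : ℕ} (ρ : EN N → ℝ) (p v w : EN N) : ℝ :=
  fderiv ℝ (fderiv ℝ ρ) p v w

/-- The Levi form `∑_{j,k} ∂²ρ/∂z_j∂z̄_k (p) w_j w̄_k`, expressed through the real Hessian. -/
def LeviForm {N : ℕ} (ρ : EN N → ℝ) (p w : EN N) : ℝ :=
  (Hess ρ p w w + Hess ρ p (Complex.I • w) (Complex.I • w)) / 4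

/-- `w` belongs to the complex tangent space `{w : ∑_j ∂ρ/∂z_j(p) w_j = 0}` at `p`. -/
def ComplexTangent {N : ℕ} (ρ : EN N → ℝ) (p w : EN N) : Prop :=
  fderiv ℝ ρ p w = 0 ∧ fderiv ℝ ρ p (Complex.I • w) = 0

/-- `ρ` is a `C²` defining function for `D` on the open neighborhood `V` of `cl D`. -/
def IsDefiningFunctionOn {N : ℕ} (D : Set (EN N)) (ρ : EN N → ℝ) (V : Set (EN N)) : Prop :=
  IsOpen V ∧ closure D ⊆ V ∧ ContDiffOn ℝ 2 ρ V ∧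
  D = {z ∈ V | ρ z < 0} ∧ ∀ p ∈ frontier D, fderiv ℝ ρ p ≠ 0

/-- `D` is a strictly pseudoconvex domain with defining function `ρ`. -/
def StrictPSCWith {N : ℕ} (D : Set (EN N)) (ρ : EN N → ℝ) : Prop :=
  IsDomainSet D ∧ Bornology.IsBounded D ∧ (∃ V, IsDefiningFunctionOn D ρ V) ∧
  ∀ p ∈ frontier D, ∀ w : EN N, w ≠ 0 → ComplexTangent ρ p w → 0 < LeviForm ρ p w

/-- `D` is a strictly pseudoconvex domain. -/
def StrictlyPseudoconvex {N : ℕ} (D : Set (EN N)) : Prop := ∃ ρ, StrictPSCWith D ρ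

/-- `ρ` and `σ` are at `C²`-distance `< ε` on `V`. -/
def C2DistLt {N : ℕ} (V : Set (EN N)) (ρ σ : EN N → ℝ) (ε : ℝ) : Prop :=
  ∀ z ∈ V, |ρ z - σ z| + ‖fderiv ℝ ρ z - fderiv ℝ σ z‖ +
    ‖fderiv ℝ (fderiv ℝ ρ) z - fderiv ℝ (fderiv ℝ σ) z‖ < ε

/-- The standing assumptions on the map `γ : bD × [0,1] → cl D`: it is `C^k`, maps
`bD × [0,1)` into `D`, satisfies `γ(x,1) = x`, and the curves `r ↦ γ(x,r)` hit `bD`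
transversally at `x` (the `r`-derivative at `1` is not annihilated by `dρ(x)`,
i.e. it is not tangent to `bD` at `x`). -/
def GammaMap {N : ℕ} (D : Set (EN N)) (ρ : EN N → ℝ) (γ : EN N × ℝ → EN N) (k : ℕ) : Prop :=
  ContDiffOn ℝ k γ ((frontier D) ×ˢ Icc (0:ℝ) 1) ∧
  (∀ x ∈ frontier D, ∀ r ∈ Ico (0:ℝ) 1, γ (x, r) ∈ D) ∧
  (∀ x ∈ frontier D, γ (x, 1) = x) ∧
  ∀ x ∈ frontier D, fderiv ℝ ρ x (derivWithin (fun r => γ (x, r)) (Icc (0:ℝ) 1) 1) ≠ 0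

/-- Assumption (†): for all `r` close enough to `1`, `bD_r := γ(bD × {r})` bounds a strictly
pseudoconvex domain `D_r ⊆ D` whose defining function converges to `ρ` in `C²` norm on a
neighborhood `V` of `cl D` as `r → 1`. -/
def Dagger {N : ℕ} (D : Set (EN N)) (ρ : EN N → ℝ) (γ : EN N × ℝ → EN N) : Prop :=
  ∃ V : Set (EN N), IsOpen V ∧ closure D ⊆ V ∧
  ∃ (Dr : ℝ → Set (EN N)) (ρr : ℝ → EN N → ℝ),
    ∀ ε > 0, ∃ r₀ ∈ Ico (0:ℝ) 1, ∀ r ∈ Ioo r₀ 1,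
      StrictPSCWith (Dr r) (ρr r) ∧ Dr r ⊆ D ∧
      frontier (Dr r) = (fun x => γ (x, r)) '' frontier D ∧
      C2DistLt V (ρr r) ρ ε

/-- The `(2N-1)`-dimensional Hausdorff (surface) measure on `bD`. -/
def surfMeasure {N : ℕ} (D : Set (EN N)) : Measure (EN N) :=
  (Measure.hausdorffMeasure (2 * (N:ℝ) - 1)).restrict (frontier D)

/-- The normalized surface measure on `bD`. -/
def surfMeasureNorm {N : ℕ} (D : Set (EN N)) : Measure (EN N) :=
  ((Measure.hausdorffMeasure (2 * (N:ℝ) - 1) : Measure (EN N)) (frontier D))⁻¹ • surfMeasure D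

/-- The set `𝒲((r_j))` of `f ∈ 𝒪(D)` such that every measurable function on `bD` is an
a.e. limit of `f ∘ γ(·, r_{j_k})` along some subsequence of `(r_j)`. -/
def WSet {N : ℕ} (D : Set (EN N)) (γ : EN N × ℝ → EN N) (r : ℕ → ℝ) : Set ↥(Hol D) :=
  {f | ∀ h : EN N → ℂ, Measurable h → ∃ φ : ℕ → ℕ, StrictMono φ ∧
    ∀ᵐ x ∂ surfMeasure D, Tendsto (fun k => f.1 (γ (x, r (φ k)))) atTop (𝓝 (h x))}

/-- `Γ` is a closed cap of a convex set `V`: the closure of a connected component of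
`V \ H` for some real affine hyperplane `H` (for convex `V`, a nonempty open half-space
slice of `V`). -/
def IsClosedCap {N : ℕ} (V : Set (EN N)) (Γ : Set (EN N)) : Prop :=
  ∃ (l : EN N →L[ℝ] ℝ) (c : ℝ), l ≠ 0 ∧ (V ∩ {z | c < l z}).Nonempty ∧
    Γ = closure (V ∩ {z | c < l z})

/-- `V` is a strictly convex domain: a bounded convex domain with `C²` boundary whose
defining function has positive definite real Hessian on the real tangent space. -/
def StrictlyConvexDomain {N : ℕ} (V : Set (EN N)) : Prop :=
  IsDomainSet V ∧ Bornology.IsBounded V ∧ Convex ℝ V ∧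
  ∃ (ρ : EN N → ℝ) (W : Set (EN N)), IsDefiningFunctionOn V ρ W ∧
    ∀ p ∈ frontier V, ∀ w : EN N, w ≠ 0 → fderiv ℝ ρ p w = 0 → 0 < Hess ρ p w w

/-- The defining function `‖z‖² - 1` of the unit ball. -/
def ballRho {N : ℕ} : EN N → ℝ := fun z => ‖z‖ ^ 2 - 1

/-- The normalized surface measure on the unit sphere of `ℂ^N`. -/
def sphMeasure (N : ℕ) : Measure (EN N) :=
  ((Measure.hausdorffMeasure (2 * (N:ℝ) - 1) : Measure (EN N)) (Metric.sphere 0 1))⁻¹ •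
    (Measure.hausdorffMeasure (2 * (N:ℝ) - 1)).restrict (Metric.sphere 0 1)

/-- `v` is a weight: increasing on `[0,∞)`, nonnegative, and tending to `∞`. -/
def IsWeight (v : ℝ → ℝ) : Prop :=
  (∀ x ∈ Ici (0:ℝ), 0 ≤ v x) ∧ MonotoneOn v (Ici 0) ∧ Tendsto v atTop atTop

/-- The norm `‖f‖ = sup_{z ∈ 𝔹_N} |f z| / v(|z|)` of `H_v^0`. -/
def hvNorm {N : ℕ} (v : ℝ → ℝ) (f : EN N → ℂ) : ℝ :=
  ⨆ z ∈ Metric.ball (0:EN N) 1, ‖f z‖ / v ‖z‖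

/-- Membership in `H_v^0`: `f` is holomorphic on `𝔹_N` and `sup_{|z|=r} |f z| / v(r) → 0`
as `r → 1⁻`. -/
def MemHv {N : ℕ} (v : ℝ → ℝ) (f : EN N → ℂ) : Prop :=
  DifferentiableOn ℂ f (Metric.ball 0 1) ∧
  Tendsto (fun r : ℝ => ⨆ z ∈ Metric.sphere (0:EN N) r, ‖f z‖ / v r) (𝓝[<] 1) (𝓝 0)

/-- `S` contains, relatively to `H_v^0` with its norm topology, a dense `G_δ` subset:
there are countably many relatively norm-open sets `U n` whose intersection with `H_v^0`
is norm-dense in `H_v^0` and contained in `S`. -/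
def ResidualInHv {N : ℕ} (v : ℝ → ℝ) (S : Set (EN N → ℂ)) : Prop :=
  ∃ U : ℕ → Set (EN N → ℂ),
    (∀ n, ∀ f, MemHv v f → f ∈ U n →
      ∃ δ > 0, ∀ g, MemHv v g → hvNorm v (g - f) < δ → g ∈ U n) ∧
    (∀ f, MemHv v f → ∀ δ > 0, ∃ g, MemHv v g ∧ (∀ n, g ∈ U n) ∧ hvNorm v (g - f) < δ) ∧
    ∀ f, MemHv v f → (∀ n, f ∈ U n) → f ∈ S

/-- `S` is densely lineable in `H_v^0`: `S ∪ {0}` contains a norm-dense subspace of `H_v^0`. -/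
def DenselyLineableInHv {N : ℕ} (v : ℝ → ℝ) (S : Set (EN N → ℂ)) : Prop :=
  ∃ p : Submodule ℂ (EN N → ℂ), (↑p ⊆ {f : EN N → ℂ | MemHv v f}) ∧ (↑p ⊆ S ∪ {0}) ∧
    ∀ f, MemHv v f → ∀ δ > 0, ∃ g ∈ p, hvNorm v (g - f) < δ

/-- `S` is spaceable in `H_v^0`: `S ∪ {0}` contains a norm-closed infinite-dimensional
subspace of `H_v^0`. -/
def SpaceableInHv {N : ℕ} (v : ℝ → ℝ) (S : Set (EN N → ℂ)) : Prop :=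
  ∃ p : Submodule ℂ (EN N → ℂ), (↑p ⊆ {f : EN N → ℂ | MemHv v f}) ∧ (↑p ⊆ S ∪ {0}) ∧
    ¬ Module.Finite ℂ ↥p ∧
    ∀ f, MemHv v f → (∀ δ > 0, ∃ g ∈ p, hvNorm v (g - f) < δ) → f ∈ p

/-- The standing assumptions on the family `{γ_z : z ∈ 𝔹_N}`: each `γ_z` is a `C¹` map
`b𝔹_N × [0,1] → cl 𝔹_N` into `𝔹_N` for `r < 1` with `γ_z(x,1) = x`, transversal approach
and (†), with joint continuity of `(z,x,r) ↦ γ_z(x,r)` and of `(z,r) ↦ ∂γ_z(x,r)/∂r`. -/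
def BallGammaFamily {N : ℕ} (γ : EN N → EN N × ℝ → EN N) : Prop :=
  (∀ z ∈ Metric.ball (0:EN N) 1,
    GammaMap (Metric.ball 0 1) ballRho (γ z) 1 ∧ Dagger (Metric.ball 0 1) ballRho (γ z)) ∧
  ContinuousOn (fun p : EN N × (EN N × ℝ) => γ p.1 p.2)
    (Metric.ball 0 1 ×ˢ (Metric.sphere 0 1 ×ˢ Icc (0:ℝ) 1)) ∧
  ∀ x ∈ Metric.sphere (0:EN N) 1,
    ContinuousOn (fun p : EN N × ℝ => derivWithin (fun r => γ p.1 (x, r)) (Icc (0:ℝ) 1) p.2)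
      (Metric.ball 0 1 ×ˢ Icc (0:ℝ) 1)

/-- The set of `f` such that for every `z ∈ 𝔹_N`, every measurable function on `b𝔹_N` is an
a.e. limit of `f ∘ γ_z(·, r_{j_k})` along some subsequence of `(r_j)`. -/
def WSetHv {N : ℕ} (γ : EN N → EN N × ℝ → EN N) (r : ℕ → ℝ) : Set (EN N → ℂ) :=
  {f | ∀ z ∈ Metric.ball (0:EN N) 1, ∀ h : EN N → ℂ, Measurable h →
    ∃ φ : ℕ → ℕ, StrictMono φ ∧
      ∀ᵐ x ∂ sphMeasure N, Tendsto (fun k => f (γ z (x, r (φ k)))) atTop (𝓝 (h x))}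

/-- The set `E_L^* = {γ_z(x,r) : x ∈ E, r ∈ [0,1], z ∈ L}`. -/
def EStarSet {N : ℕ} (γ : EN N → EN N × ℝ → EN N) (L E : Set (EN N)) : Set (EN N) :=
  {w | ∃ z ∈ L, ∃ x ∈ E, ∃ r ∈ Icc (0:ℝ) 1, w = γ z (x, r)}

/-- The Korányi approach region `D_α(x)`. -/
def Koranyi {N : ℕ} (α : ℝ) (x : EN N) : Set (EN N) :=
  {z ∈ Metric.ball (0:EN N) 1 | ‖1 - (⟪x, z⟫_ℂ : ℂ)‖ < α / 2 * (1 - ‖z‖ ^ 2)}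

/-- `h` has a `K`-limit at `x`: for every `α > 1` the values of `h` converge along every
sequence in `D_α(x)` converging to `x`. -/
def HasKLimitAt {N : ℕ} (h : EN N → ℂ) (x : EN N) : Prop :=
  ∀ α > (1:ℝ), ∃ c : ℂ, ∀ z : ℕ → EN N, (∀ i, z i ∈ Koranyi α x) →
    Tendsto z atTop (𝓝 x) → Tendsto (fun i => h (z i)) atTop (𝓝 c)

/-- The circle `bL_x = L_x ∩ b𝔹_N` cut out on the complex line through `x` and `0`. -/
def lineCircle {N : ℕ} (x : EN N) : Set (EN N) :=
  {z | ∃ t : ℂ, z = t • x} ∩ Metric.sphere 0 1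

end

/-- Quantitative bound for the rational approximation of an indicator function. -/
lemma lab_ratio (R δ : ℝ) (hδ : 0 < δ) :
    ∃ κ : ℝ, 0 ≤ κ ∧ κ < 1 ∧ ∀ ζ : ℂ, ‖ζ‖ ≤ R → ζ.re ≤ -δ → ‖ζ + 1‖ ≤ κ * ‖ζ - 1‖ := by
  by_cases hR : R < 0
  · refine ⟨0, le_rfl, one_pos, fun ζ h => ?_⟩
    have := norm_nonneg ζ
    linarith
  push Not at hR
  have hpos : 0 < (R + 1) ^ 2 := by positivity
  refine ⟨Real.sqrt (1 - 4 * δ / (R + 1) ^ 2), Real.sqrt_nonneg _, ?_, ?_⟩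
  · rw [Real.sqrt_lt' one_pos]
    have : 0 < 4 * δ / (R + 1) ^ 2 := by positivity
    linarith
  · intro ζ h1 h2
    have e1 : ‖ζ + 1‖ ^ 2 = ζ.re ^ 2 + ζ.im ^ 2 + 2 * ζ.re + 1 := by
      rw [← Complex.normSq_eq_norm_sq, Complex.normSq_apply]; simp; ring
    have e2 : ‖ζ - 1‖ ^ 2 = ζ.re ^ 2 + ζ.im ^ 2 - 2 * ζ.re + 1 := by
      rw [← Complex.normSq_eq_norm_sq, Complex.normSq_apply]; simp; ring
    have h3 : ‖ζ - 1‖ ≤ R + 1 := (norm_sub_le _ _).trans (by simpa using h1)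
    have h4 : ‖ζ - 1‖ ^ 2 ≤ (R + 1) ^ 2 := by gcongr
    have h5 : 4 * δ / (R + 1) ^ 2 * ‖ζ - 1‖ ^ 2 ≤ 4 * δ := by
      rw [div_mul_eq_mul_div, div_le_iff₀ hpos]
      gcongr
    have h6 : ‖ζ + 1‖ ^ 2 ≤ (1 - 4 * δ / (R + 1) ^ 2) * ‖ζ - 1‖ ^ 2 := by
      rw [sub_mul, one_mul]; linarith
    calc ‖ζ + 1‖ = Real.sqrt (‖ζ + 1‖ ^ 2) := (Real.sqrt_sq (norm_nonneg _)).symm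
      _ ≤ Real.sqrt ((1 - 4 * δ / (R + 1) ^ 2) * ‖ζ - 1‖ ^ 2) := Real.sqrt_le_sqrt h6
      _ = _ := by rw [Real.sqrt_mul' _ (by positivity), Real.sqrt_sq (norm_nonneg _)]

lemma lab_quot {a b : ℂ} {η : ℝ} (h0 : η ≤ 1 / 2) (hb : b ≠ 0) (h : ‖a‖ ≤ η * ‖b‖) :
    ‖a / (b + a)‖ ≤ 2 * η := by
  have hb' : 0 < ‖b‖ := norm_pos_iff.2 hb
  have h1 : ‖b‖ ≤ ‖b + a‖ + ‖a‖ := by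
    calc ‖b‖ = ‖(b + a) - a‖ := by ring_nf
      _ ≤ _ := norm_sub_le _ _
  have h2 : ‖b‖ / 2 ≤ ‖b + a‖ := by nlinarith
  have h3 : 0 < ‖b + a‖ := by linarith
  have hη : 0 ≤ η := by
    by_contra hc
    push Not at hc
    have := mul_neg_of_neg_of_pos hc hb'
    linarith [norm_nonneg a]
  rw [norm_div, div_le_iff₀ h3]
  nlinarith

set_option maxHeartbeats 1000000 in
/-- Polynomials approximating the indicator function of a half-plane (a special case of the Runge
theorem). -/
lemma lab_runge (R δ ε : ℝ) (hδ : 0 < δ) (hε : 0 < ε) :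
    ∃ P : Polynomial ℂ, (∀ ζ : ℂ, ‖ζ‖ ≤ R → ζ.re ≤ -δ → ‖P.eval ζ - 1‖ ≤ ε) ∧
      (∀ ζ : ℂ, ‖ζ‖ ≤ R → δ ≤ ζ.re → ‖P.eval ζ‖ ≤ ε) := by
  set S : Set ℂ := {ζ | ‖ζ‖ ≤ R ∧ δ ≤ |ζ.re|} with hS
  have hScl : IsClosed S := by
    apply IsClosed.inter
    · exact isClosed_le continuous_norm continuous_const
    · exact isClosed_le continuous_const (Complex.continuous_re.abs)
  have hScpt : IsCompact S := by
    apply Metric.isCompact_of_isClosed_isBounded hScl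
    refine (Metric.isBounded_closedBall (x := (0 : ℂ)) (r := R)).subset ?_
    intro ζ hζ
    simpa using hζ.1
  have : CompactSpace S := isCompact_iff_compactSpace.1 hScpt
  let 𝒜 : Subalgebra ℂ C(S, ℂ) := (polynomialFunctions S).topologicalClosure
  have : CompleteSpace 𝒜 :=
    (Subalgebra.isClosed_topologicalClosure (polynomialFunctions S)).completeSpace_coe
  let e : 𝒜 := ⟨Polynomial.toContinuousMapOn Polynomial.X S,
    Subalgebra.le_topologicalClosure _ ⟨Polynomial.X, trivial, rfl⟩⟩
  have he : ∀ ζ : S, e.1 ζ = ζ := fun ζ => by simp [e]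
  let ev : S → (𝒜 →ₐ[ℂ] ℂ) := fun ζ => (ContinuousMap.evalAlgHom ℂ ℂ ζ).comp 𝒜.val
  have hev : ∀ ζ (a : 𝒜), ev ζ a = a.1 ζ := fun ζ a => rfl
  have haeval : ∀ (ζ : S) (p : Polynomial ℂ), (Polynomial.aeval e p).1 ζ = p.eval (ζ : ℂ) := by
    intro ζ p
    rw [← hev, ← Polynomial.aeval_algHom_apply, hev, he, Polynomial.coe_aeval_eq_eval]
  -- units
  let c : ℝ → 𝒜 := fun t => e - algebraMap ℂ 𝒜 (t * Complex.I)
  have hc : ∀ t (ζ : S), (c t).1 ζ = ζ - t * Complex.I := by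
    intro t ζ
    rw [← hev, map_sub, hev, he, AlgHom.commutes]; rfl
  have hnear : ∀ t t' : ℝ, IsUnit (c t) → |t' - t| < δ → IsUnit (c t') := by
    rintro t t' ⟨u, hu⟩ htt
    have hinv : ‖(↑u⁻¹ : 𝒜)‖ ≤ 1 / δ := by
      change ‖(↑u⁻¹ : 𝒜).1‖ ≤ 1 / δ
      rw [ContinuousMap.norm_le _ (by positivity)]
      intro ζ
      have h1 : (↑u⁻¹ : 𝒜).1 ζ * ((ζ : ℂ) - t * Complex.I) = 1 := by
        rw [← hc, ← hev, ← hev, ← map_mul, ← hu, Units.inv_mul, map_one]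
      have h2 : δ ≤ ‖(ζ : ℂ) - t * Complex.I‖ := by
        refine ζ.2.2.trans ?_
        have := Complex.abs_re_le_norm ((ζ : ℂ) - t * Complex.I)
        simpa using this
      rw [le_div_iff₀ hδ]
      calc _ ≤ ‖(↑u⁻¹ : 𝒜).1 ζ‖ * ‖(ζ : ℂ) - t * Complex.I‖ := by gcongr
        _ = 1 := by rw [← norm_mul, h1, norm_one]
    have hdiff : ‖c t - c t'‖ ≤ |t' - t| := by
      change ‖(c t - c t').1‖ ≤ _
      rw [ContinuousMap.norm_le _ (by positivity)]
      intro ζ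
      rw [← hev, map_sub, hev, hev, hc, hc]
      have : (ζ : ℂ) - t * Complex.I - (ζ - t' * Complex.I) = ((t' - t : ℝ) : ℂ) * Complex.I := by
        push_cast; ring
      rw [this, norm_mul, Complex.norm_I, mul_one, Complex.norm_real, Real.norm_eq_abs]
    have hlt : ‖(↑u⁻¹ : 𝒜) * (c t - c t')‖ < 1 := by
      calc _ ≤ ‖(↑u⁻¹ : 𝒜)‖ * ‖c t - c t'‖ := norm_mul_le _ _
        _ ≤ 1 / δ * |t' - t| := by gcongr
        _ < 1 / δ * δ := by gcongr
        _ = 1 := by field_simp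
    have h3 := isUnit_one_sub_of_norm_lt_one hlt
    have h4 : c t' = u * (1 - (↑u⁻¹ : 𝒜) * (c t - c t')) := by
      rw [mul_sub, mul_one, Units.mul_inv_cancel_left, hu]; ring
    rw [h4]
    exact u.isUnit.mul h3
  have hbig : IsUnit (c (|R| + 1)) := by
    set T : ℝ := |R| + 1 with hT
    have hTpos : 0 < T := by positivity
    have hTI : ((T : ℂ) * Complex.I) ≠ 0 := by
      simp [hTpos.ne']
    have h1 : ‖(((T : ℂ) * Complex.I)⁻¹ • e : 𝒜)‖ < 1 := by
      rw [norm_smul]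
      have : ‖e‖ ≤ |R| := by
        change ‖e.1‖ ≤ _
        rw [ContinuousMap.norm_le _ (by positivity)]
        intro ζ
        rw [he]
        exact ζ.2.1.trans (le_abs_self R)
      have hn : ‖((T : ℂ) * Complex.I)⁻¹‖ = T⁻¹ := by
        rw [norm_inv, norm_mul, Complex.norm_I, mul_one, Complex.norm_real, Real.norm_eq_abs,
          abs_of_pos hTpos]
      rw [hn]
      calc T⁻¹ * ‖e‖ ≤ T⁻¹ * |R| := by gcongr
        _ < T⁻¹ * T := by gcongr; linarith
        _ = 1 := by field_simp
    have h2 := isUnit_one_sub_of_norm_lt_one h1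
    have h3 : c T = algebraMap ℂ 𝒜 (-((T : ℂ) * Complex.I)) *
        (1 - ((T : ℂ) * Complex.I)⁻¹ • e) := by
      rw [mul_sub, mul_one, ← Algebra.smul_def, smul_smul, neg_mul, mul_inv_cancel₀ hTI]
      rw [map_neg, neg_smul, one_smul]
      change e - algebraMap ℂ 𝒜 ((T : ℂ) * Complex.I) = _
      abel
    rw [h3]
    exact ((isUnit_iff_ne_zero.2 (neg_ne_zero.2 hTI)).map (algebraMap ℂ 𝒜)).mul h2
  have hall : ∀ t, IsUnit (c t) := by
    have hcl : IsClopen {t | IsUnit (c t)} := by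
      constructor
      · rw [← isOpen_compl_iff, Metric.isOpen_iff]
        intro t ht
        refine ⟨δ, hδ, fun t' ht' hu => ht (hnear t' t hu ?_)⟩
        rw [abs_sub_comm]; exact ht'
      · rw [Metric.isOpen_iff]
        intro t ht
        exact ⟨δ, hδ, fun t' ht' => hnear t t' ht ht'⟩
    have := hcl.eq_univ ⟨_, hbig⟩
    intro t
    have h : t ∈ {t | IsUnit (c t)} := by rw [this]; exact mem_univ t
    exact h
  -- rational functions with poles on the imaginary axis
  have hrat : ∀ Q : Polynomial ℂ, Q ≠ 0 → (∀ ζ, Q.eval ζ = 0 → ζ.re = 0) →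
      IsUnit (Polynomial.aeval e Q) := by
    intro Q hQ hroot
    rw [(IsAlgClosed.splits Q).eq_prod_roots]
    rw [map_mul, Polynomial.aeval_C]
    refine ((isUnit_iff_ne_zero.2 (Polynomial.leadingCoeff_ne_zero.2 hQ)).map _).mul ?_
    have : ∀ s : Multiset ℂ, (∀ a ∈ s, a.re = 0) → IsUnit (Polynomial.aeval e
        (s.map fun a => Polynomial.X - Polynomial.C a).prod) := by
      intro s
      induction s using Multiset.induction_on with
      | empty => intro _; simp
      | cons a s ih =>
        intro h
        rw [Multiset.map_cons, Multiset.prod_cons, map_mul]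
        refine IsUnit.mul ?_ (ih fun b hb => h b (Multiset.mem_cons_of_mem hb))
        have ha := h a (Multiset.mem_cons_self a s)
        have : a = (a.im : ℂ) * Complex.I := by
          apply Complex.ext <;> simp [ha]
        have h2 := hall a.im
        simp only [c] at h2
        rw [← this] at h2
        simpa using h2
    apply this
    intro a ha
    exact hroot a (Polynomial.isRoot_of_mem_roots ha)
  obtain ⟨κ, hκ0, hκ1, hκ⟩ := lab_ratio R δ hδ
  obtain ⟨n, hn⟩ : ∃ n : ℕ, κ ^ n < min (1 / 2) (ε / 4) :=
    exists_pow_lt_of_lt_one (by positivity) hκ1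
  have hn1 : κ ^ n ≤ 1 / 2 := hn.le.trans (min_le_left _ _)
  have hn2 : κ ^ n ≤ ε / 4 := hn.le.trans (min_le_right _ _)
  let Q : Polynomial ℂ := (Polynomial.X - 1) ^ n + (Polynomial.X + 1) ^ n
  have hQev : ∀ ζ, Q.eval ζ = (ζ - 1) ^ n + (ζ + 1) ^ n := fun ζ => by simp [Q]
  have hnpos : n ≠ 0 := by
    rintro rfl
    norm_num at hn1
  have hQ0 : Q ≠ 0 := by
    intro h
    have := hQev 1
    rw [h] at this
    norm_num [hnpos] at this
    exact pow_ne_zero n two_ne_zero this.symm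
  have hQr : ∀ ζ, Q.eval ζ = 0 → ζ.re = 0 := by
    intro ζ h
    rw [hQev] at h
    have h1 : (ζ - 1) ^ n = -(ζ + 1) ^ n := eq_neg_of_add_eq_zero_left h
    have h2 : ‖ζ - 1‖ ^ n = ‖ζ + 1‖ ^ n := by
      rw [← norm_pow, h1, norm_neg, norm_pow]
    have h3 : ‖ζ - 1‖ = ‖ζ + 1‖ :=
      (pow_left_inj₀ (norm_nonneg _) (norm_nonneg _) hnpos).1 h2
    have h4 : ‖ζ - 1‖ ^ 2 = ‖ζ + 1‖ ^ 2 := by rw [h3]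
    rw [← Complex.normSq_eq_norm_sq, ← Complex.normSq_eq_norm_sq, Complex.normSq_apply,
      Complex.normSq_apply] at h4
    simp at h4
    nlinarith
  obtain ⟨u, hu⟩ := hrat Q hQ0 hQr
  let g : 𝒜 := Polynomial.aeval e ((Polynomial.X - 1) ^ n : Polynomial ℂ) * (↑u⁻¹ : 𝒜)
  have hg : ∀ ζ : S, g.1 ζ = ((ζ : ℂ) - 1) ^ n / (((ζ : ℂ) - 1) ^ n + ((ζ : ℂ) + 1) ^ n) := by
    intro ζ
    have h1 : (↑u⁻¹ : 𝒜).1 ζ * (((ζ : ℂ) - 1) ^ n + ((ζ : ℂ) + 1) ^ n) = 1 := by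
      rw [← hQev, ← haeval, ← hev, ← hev, ← map_mul, ← hu, Units.inv_mul, map_one]
    rw [← hev, map_mul, hev, hev, haeval, eq_div_iff (right_ne_zero_of_mul_eq_one h1), mul_assoc, h1]
    simp
  -- approximation
  obtain ⟨G, hG, hGd⟩ := Metric.mem_closure_iff.1 (show g.1 ∈ closure _ from g.2) (ε / 2)
    (by positivity)
  obtain ⟨P, -, rfl⟩ := hG
  have hP : ∀ ζ (h : ζ ∈ S), ‖P.eval ζ - g.1 ⟨ζ, h⟩‖ ≤ ε / 2 := by
    intro ζ h
    have := (ContinuousMap.dist_apply_le_dist (f := g.1)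
      (g := Polynomial.toContinuousMapOnAlgHom S P) ⟨ζ, h⟩).trans hGd.le
    rw [dist_comm, dist_eq_norm] at this
    simpa using this
  refine ⟨P, fun ζ h1 h2 => ?_, fun ζ h1 h2 => ?_⟩
  · have hζ : ζ ∈ S := ⟨h1, by rw [abs_of_nonpos (by linarith)]; linarith⟩
    have hne : ζ - 1 ≠ 0 := by
      intro h
      have := congrArg Complex.re h
      simp at this; linarith
    have h3 : ‖(ζ + 1) ^ n‖ ≤ κ ^ n * ‖(ζ - 1) ^ n‖ := by
      rw [norm_pow, norm_pow, ← mul_pow]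
      gcongr
      exact hκ ζ h1 h2
    have h4 := lab_quot hn1 (pow_ne_zero n hne) h3
    have h5 : g.1 ⟨ζ, hζ⟩ - 1 = -((ζ + 1) ^ n / ((ζ - 1) ^ n + (ζ + 1) ^ n)) := by
      rw [hg]
      have : (ζ - 1) ^ n + (ζ + 1) ^ n ≠ 0 := by
        rw [← hQev]
        intro h
        have := hQr _ h
        linarith
      simp only
      field_simp
      ring
    calc ‖P.eval ζ - 1‖ = ‖(P.eval ζ - g.1 ⟨ζ, hζ⟩) + (g.1 ⟨ζ, hζ⟩ - 1)‖ := by ring_nf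
      _ ≤ ‖P.eval ζ - g.1 ⟨ζ, hζ⟩‖ + ‖g.1 ⟨ζ, hζ⟩ - 1‖ := norm_add_le _ _
      _ ≤ ε / 2 + 2 * κ ^ n := by
        gcongr
        · exact hP _ _
        · rw [h5, norm_neg]; exact h4
      _ ≤ ε := by linarith
  · have hζ : ζ ∈ S := ⟨h1, by rw [abs_of_nonneg (by linarith)]; linarith⟩
    have hne : ζ + 1 ≠ 0 := by
      intro h
      have := congrArg Complex.re h
      simp at this; linarith
    have h3 : ‖(ζ - 1) ^ n‖ ≤ κ ^ n * ‖(ζ + 1) ^ n‖ := by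
      rw [norm_pow, norm_pow, ← mul_pow]
      gcongr
      have := hκ (-ζ) (by simpa using h1) (by simpa using h2)
      rw [show -ζ + 1 = -(ζ - 1) by ring, show -ζ - 1 = -(ζ + 1) by ring, norm_neg, norm_neg] at this
      exact this
    have h4 := lab_quot hn1 (pow_ne_zero n hne) h3
    calc ‖P.eval ζ‖ = ‖(P.eval ζ - g.1 ⟨ζ, hζ⟩) + g.1 ⟨ζ, hζ⟩‖ := by ring_nf
      _ ≤ ‖P.eval ζ - g.1 ⟨ζ, hζ⟩‖ + ‖g.1 ⟨ζ, hζ⟩‖ := norm_add_le _ _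
      _ ≤ ε / 2 + 2 * κ ^ n := by
        gcongr
        · exact hP _ _
        · rw [hg, add_comm ((ζ - 1) ^ n)]; exact h4
      _ ≤ ε := by linarith

/-- Working form of compact `𝒪(D)`-convexity. -/
def LabCvx {N : ℕ} (D A : Set (EN N)) : Prop :=
  IsCompact A ∧ A ⊆ D ∧ ∀ z ∈ D, z ∉ A → ∃ φ : EN N → ℂ, DifferentiableOn ℂ φ D ∧
    ∃ c : ℝ, 0 ≤ c ∧ (∀ w ∈ A, ‖φ w‖ ≤ c) ∧ c < ‖φ z‖

lemma lab_bdd {N : ℕ} {A : Set (EN N)} (hA : IsCompact A) {φ : EN N → ℂ}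
    (hφ : ContinuousOn φ A) : ∃ b : ℝ, 0 ≤ b ∧ ∀ w ∈ A, ‖φ w‖ ≤ b := by
  obtain ⟨C, hC⟩ := hA.exists_bound_of_continuousOn hφ
  exact ⟨max C 0, le_max_right _ _, fun w hw => (hC w hw).trans (le_max_left _ _)⟩

lemma lab_iSup_le {N : ℕ} {A : Set (EN N)} {φ : EN N → ℂ} {c : ℝ} (hc : 0 ≤ c)
    (h : ∀ w ∈ A, ‖φ w‖ ≤ c) : (⨆ w ∈ A, ‖φ w‖) ≤ c :=
  Real.iSup_le (fun w => Real.iSup_le (fun hw => h w hw) hc) hc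

lemma lab_le_iSup {N : ℕ} {A : Set (EN N)} {φ : EN N → ℂ} {c : ℝ} (hc : 0 ≤ c)
    (h : ∀ w ∈ A, ‖φ w‖ ≤ c) {w : EN N} (hw : w ∈ A) : ‖φ w‖ ≤ ⨆ w ∈ A, ‖φ w‖ := by
  have h1 : BddAbove (range fun w => ⨆ (_ : w ∈ A), ‖φ w‖) := by
    refine ⟨c, ?_⟩
    rintro _ ⟨v, rfl⟩
    exact Real.iSup_le (fun hv => h v hv) hc
  have h2 := le_ciSup h1 w
  simpa [hw] using h2

lemma LabCvx.holConvexIn {N : ℕ} {D A : Set (EN N)} (h : LabCvx D A) : HolConvexIn D A := by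
  refine ⟨h.2.1, Subset.antisymm ?_ ?_⟩
  · rintro z ⟨hz, hz2⟩
    by_contra hzA
    obtain ⟨φ, hφ, c, hc0, hc1, hc2⟩ := h.2.2 z hz hzA
    exact absurd ((hz2 φ hφ).trans (lab_iSup_le hc0 hc1)) (not_le.2 hc2)
  · intro z hz
    refine ⟨h.2.1 hz, fun φ hφ => ?_⟩
    obtain ⟨b, hb0, hb⟩ := lab_bdd h.1 (hφ.continuousOn.mono h.2.1)
    exact lab_le_iSup hb0 hb hz

lemma HolConvexIn.labCvx {N : ℕ} {D A : Set (EN N)} (h : HolConvexIn D A) (hA : IsCompact A) :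
    LabCvx D A := by
  refine ⟨hA, h.1, fun z hz hzA => ?_⟩
  have : z ∉ holHull D A := by rw [h.2]; exact hzA
  have h2 : ∃ φ : EN N → ℂ, DifferentiableOn ℂ φ D ∧ (⨆ w ∈ A, ‖φ w‖) < ‖φ z‖ := by
    by_contra hcon
    push Not at hcon
    exact this ⟨hz, hcon⟩
  obtain ⟨φ, hφ, hlt⟩ := h2
  obtain ⟨b, hb0, hb⟩ := lab_bdd hA (hφ.continuousOn.mono h.1)
  exact ⟨φ, hφ, _, Real.iSup_nonneg fun w => Real.iSup_nonneg fun _ => norm_nonneg _,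
    fun w hw => lab_le_iSup hb0 hb hw, hlt⟩

/-- Separation of compact sets lying on two sides of a level set of a pluriharmonic function. -/
lemma lab_sep {N : ℕ} {D A B : Set (EN N)} (hA : IsCompact A) (hB : IsCompact B) (hAD : A ⊆ D)
    (hBD : B ⊆ D) {h : EN N → ℂ} (hh : DifferentiableOn ℂ h D) {c₁ c₂ : ℝ} (hc : c₁ < c₂)
    (h1 : ∀ w ∈ A, (h w).re ≤ c₁) (h2 : ∀ w ∈ B, c₂ ≤ (h w).re) {ε : ℝ} (hε : 0 < ε) :
    ∃ g : EN N → ℂ, DifferentiableOn ℂ g D ∧ (∀ w ∈ A, ‖g w - 1‖ ≤ ε) ∧ ∀ w ∈ B, ‖g w‖ ≤ ε := by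
  set m : ℝ := (c₁ + c₂) / 2 with hm
  let k : EN N → ℂ := fun z => h z - m
  have hk : DifferentiableOn ℂ k D := hh.sub_const _
  obtain ⟨a, ha0, ha⟩ := lab_bdd hA (hk.continuousOn.mono hAD)
  obtain ⟨b, hb0, hb⟩ := lab_bdd hB (hk.continuousOn.mono hBD)
  obtain ⟨P, hP1, hP2⟩ := lab_runge (max a b) ((c₂ - c₁) / 2) ε (by linarith) hε
  refine ⟨fun z => P.eval (k z), ?_, fun w hw => hP1 _ ((ha w hw).trans (le_max_left _ _)) ?_,
    fun w hw => hP2 _ ((hb w hw).trans (le_max_right _ _)) ?_⟩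
  · exact P.differentiable.comp_differentiableOn hk
  · have := h1 w hw
    simp [k]; linarith
  · have := h2 w hw
    simp [k]; linarith

/-- Key half of the union lemma. -/
lemma lab_union_aux {N : ℕ} {D A B : Set (EN N)} (hA : LabCvx D A) (hB : IsCompact B)
    (hBD : B ⊆ D) {h : EN N → ℂ} (hh : DifferentiableOn ℂ h D) {c₁ c₂ : ℝ} (hc : c₁ < c₂)
    (h1 : ∀ w ∈ A, (h w).re ≤ c₁) (h2 : ∀ w ∈ B, c₂ ≤ (h w).re) {z : EN N} (hz : z ∈ D)
    (hzA : z ∉ A) (hzc : (h z).re ≤ c₁) :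
    ∃ φ : EN N → ℂ, DifferentiableOn ℂ φ D ∧
    ∃ c : ℝ, 0 ≤ c ∧ (∀ w ∈ A ∪ B, ‖φ w‖ ≤ c) ∧ c < ‖φ z‖ := by
  obtain ⟨φ, hφ, c, hc0, hcA, hcz⟩ := hA.2.2 z hz hzA
  set a := ‖φ z‖ with ha
  have ha0 : 0 < a := hc0.trans_lt hcz
  obtain ⟨b, hb0, hb⟩ := lab_bdd hB (hφ.continuousOn.mono hBD)
  obtain ⟨p, hp⟩ : ∃ p : ℕ, (c / a) ^ p < 1 / 4 :=
    exists_pow_lt_of_lt_one (by norm_num) ((div_lt_one ha0).2 hcz)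
  have hp' : c ^ p ≤ a ^ p / 4 := by
    rw [div_pow, div_lt_iff₀ (by positivity)] at hp
    linarith
  have hap : 0 < a ^ p := by positivity
  obtain ⟨g, hg, hg1, hg2⟩ := lab_sep (A := insert z A) (hA.1.insert z) hB
    (insert_subset hz hA.2.1) hBD hh hc
    (by rintro w (rfl | hw); exacts [hzc, h1 w hw]) h2
    (ε := min (1 / 2) (a ^ p / (4 * (b ^ p + 1)))) (by positivity)
  refine ⟨fun w => φ w ^ p * g w, (hφ.pow p).mul hg, 3 / 8 * a ^ p, by positivity, ?_, ?_⟩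
  · rintro w (hw | hw)
    · have h3 := (hg1 w (mem_insert_of_mem _ hw)).trans (min_le_left _ _)
      have h4 : ‖g w‖ ≤ 3 / 2 := by
        calc ‖g w‖ = ‖(g w - 1) + 1‖ := by ring_nf
          _ ≤ ‖g w - 1‖ + ‖(1 : ℂ)‖ := norm_add_le _ _
          _ ≤ 3 / 2 := by rw [norm_one]; linarith
      rw [norm_mul, norm_pow]
      calc ‖φ w‖ ^ p * ‖g w‖ ≤ c ^ p * (3 / 2) := by
            gcongr
            exact hcA w hw
        _ ≤ a ^ p / 4 * (3 / 2) := by gcongr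
        _ = _ := by ring
    · have h3 := (hg2 w hw).trans (min_le_right _ _)
      rw [norm_mul, norm_pow]
      calc ‖φ w‖ ^ p * ‖g w‖ ≤ b ^ p * (a ^ p / (4 * (b ^ p + 1))) := by
            gcongr
            exact hb w hw
        _ ≤ a ^ p / 4 := by
            have : 0 ≤ b ^ p := by positivity
            rw [mul_div_assoc', div_le_div_iff₀ (by positivity) (by norm_num)]
            nlinarith
        _ ≤ _ := by linarith
  · have h3 := (hg1 z (mem_insert _ _)).trans (min_le_left _ _)
    have h4 : 1 / 2 ≤ ‖g z‖ := by
      have : ‖(1 : ℂ)‖ ≤ ‖g z‖ + ‖g z - 1‖ := by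
        calc ‖(1 : ℂ)‖ = ‖g z - (g z - 1)‖ := by ring_nf
          _ ≤ _ := norm_sub_le _ _
      rw [norm_one] at this
      linarith
    change 3 / 8 * a ^ p < ‖φ z ^ p * g z‖
    rw [norm_mul, norm_pow, ← ha]
    nlinarith

/-- Union of two convex sets separated by a pluriharmonic function. -/
lemma LabCvx.union {N : ℕ} {D A B : Set (EN N)} (hA : LabCvx D A) (hB : LabCvx D B)
    {h : EN N → ℂ} (hh : DifferentiableOn ℂ h D) {c₁ c₂ : ℝ} (hc : c₁ < c₂)
    (h1 : ∀ w ∈ A, (h w).re ≤ c₁) (h2 : ∀ w ∈ B, c₂ ≤ (h w).re) : LabCvx D (A ∪ B) := by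
  refine ⟨hA.1.union hB.1, union_subset hA.2.1 hB.2.1, fun z hz hzAB => ?_⟩
  rw [mem_union, not_or] at hzAB
  set m := (c₁ + c₂) / 2 with hm
  by_cases hzm : (h z).re ≤ m
  · exact lab_union_aux hA hB.1 hB.2.1 hh (c₁ := m) (c₂ := c₂) (by linarith)
      (fun w hw => (h1 w hw).trans (by linarith)) h2 hz hzAB.1 hzm
  · push Not at hzm
    rw [union_comm]
    refine lab_union_aux hB hA.1 hA.2.1 hh.neg (c₁ := -m) (c₂ := -c₁) (by linarith)
      (fun w hw => ?_) (fun w hw => ?_) hz hzAB.2 ?_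
    · have := h2 w hw
      simp; linarith
    · have := h1 w hw
      simp; linarith
    · simp; linarith

lemma LabCvx.inter_re_le {N : ℕ} {D A : Set (EN N)} (hA : LabCvx D A)
    {h : EN N → ℂ} (hh : DifferentiableOn ℂ h D) (c : ℝ) :
    LabCvx D {z ∈ A | (h z).re ≤ c} := by
  refine ⟨?_, fun z hz => hA.2.1 hz.1, fun z hz hzA => ?_⟩
  · have hcont : ContinuousOn (fun z => (h z).re) A :=
      Complex.continuous_re.comp_continuousOn (hh.continuousOn.mono hA.2.1)
    exact hA.1.of_isClosed_subset
      (hcont.preimage_isClosed_of_isClosed hA.1.isClosed isClosed_Iic) (fun z hz => hz.1)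
  · by_cases hzA' : z ∈ A
    · have hlt : c < (h z).re := by
        by_contra hcon
        exact hzA ⟨hzA', not_lt.1 hcon⟩
      refine ⟨fun w => Complex.exp (h w), hh.cexp, Real.exp c, (Real.exp_pos _).le, ?_, ?_⟩
      · intro w hw
        rw [Complex.norm_exp]
        exact Real.exp_le_exp.2 hw.2
      · rw [Complex.norm_exp]
        exact Real.exp_lt_exp.2 hlt
    · obtain ⟨φ, hφ, b, hb⟩ := hA.2.2 z hz hzA'
      exact ⟨φ, hφ, b, hb.1, fun w hw => hb.2.1 w hw.1, hb.2.2⟩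

/-- The lattice point with index `n`, shifted according to the level `l`. -/
noncomputable def labP {ι : Type} (q l : ℕ) (n : ι → ℤ) (i : ι) : ℝ :=
  (n i : ℝ) + ((l % q : ℕ) : ℝ) / q

/-- The tangent affine function of the squared norm at the point `p`. -/
noncomputable def labA {ι : Type} [Fintype ι] (p x : ι → ℝ) : ℝ := ∑ i, (2 * p i * x i - p i ^ 2)

lemma labA_eq {ι : Type} [Fintype ι] (p x : ι → ℝ) :
    labA p x = ∑ i, x i ^ 2 - ∑ i, (x i - p i) ^ 2 := by
  rw [labA, ← Finset.sum_sub_distrib]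
  exact Finset.sum_congr rfl fun i _ => by ring

lemma labA_le {ι : Type} [Fintype ι] (p x : ι → ℝ) : labA p x ≤ ∑ i, x i ^ 2 := by
  rw [labA_eq]
  have : 0 ≤ ∑ i, (x i - p i) ^ 2 := Finset.sum_nonneg fun i _ => sq_nonneg _
  linarith

lemma lab_sum_le {ι : Type} [Fintype ι] (p x : ι → ℝ) (h : ∀ i, |x i - p i| ≤ 1 / 2) :
    ∑ i, x i ^ 2 ≤ labA p x + (Fintype.card ι : ℝ) / 4 := by
  rw [labA_eq]
  have : ∑ i, (x i - p i) ^ 2 ≤ ∑ _i : ι, (1 / 4 : ℝ) := by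
    refine Finset.sum_le_sum fun i _ => ?_
    have h1 := h i
    rw [← sq_abs]
    nlinarith [abs_nonneg (x i - p i)]
  simp at this
  linarith

lemma labA_other {ι : Type} [Fintype ι] {q l : ℕ} {n n' : ι → ℤ} (hn : n ≠ n') {η : ℝ}
    (hη : 0 ≤ η) (x : ι → ℝ) (h : ∀ i, |x i - labP q l n i| ≤ 1 / 2 - η) :
    labA (labP q l n') x ≤ labA (labP q l n) x - 2 * η := by
  rw [labA_eq, labA_eq]
  have key : ∀ i, n i ≠ n' i → 1 / 2 + η ≤ |x i - labP q l n' i| := by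
    intro i hi
    have h1 : (1 : ℝ) ≤ |(n i : ℝ) - n' i| := by
      have : (1 : ℤ) ≤ |n i - n' i| := Int.one_le_abs (sub_ne_zero.2 hi)
      exact_mod_cast this
    have h2 : (n i : ℝ) - n' i = (x i - labP q l n' i) - (x i - labP q l n i) := by
      simp only [labP]; ring
    have h3 := abs_sub (x i - labP q l n' i) (x i - labP q l n i)
    rw [← h2] at h3
    have := h i
    linarith
  have hsq : ∀ i, n i ≠ n' i →
      2 * η ≤ (x i - labP q l n' i) ^ 2 - (x i - labP q l n i) ^ 2 := by
    intro i hi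
    have h1 := key i hi
    have h2 := h i
    rw [← sq_abs, ← sq_abs (x i - labP q l n i)]
    nlinarith [abs_nonneg (x i - labP q l n i)]
  have hnn : ∀ i, 0 ≤ (x i - labP q l n' i) ^ 2 - (x i - labP q l n i) ^ 2 := by
    intro i
    by_cases hi : n i = n' i
    · simp [labP, hi]
    · linarith [hsq i hi]
  obtain ⟨i, hi⟩ := Function.ne_iff.1 hn
  have h5 := Finset.single_le_sum (f := fun i => (x i - labP q l n' i) ^ 2 -
    (x i - labP q l n i) ^ 2) (fun i _ => hnn i) (Finset.mem_univ i)
  have h6 := hsq i hi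
  rw [Finset.sum_sub_distrib] at h5
  linarith

/-- A wall of the labyrinth. -/
def labWall {N : ℕ} {ι : Type} [Fintype ι] (L : Set (EN N)) (X : ι → EN N → ℂ) (q : ℕ) (e : ℝ)
    (l : ℕ) (n : ι → ℤ) : Set (EN N) :=
  {z ∈ L | (∀ i, |(X i z).re - labP q l n i| ≤ 1 / 2 - 1 / (4 * q)) ∧
    labA (labP q l n) (fun i => (X i z).re) = e + q * (l + 1)}

lemma LabCvx.inter_re_le_finset {N : ℕ} {ι : Type} {D A : Set (EN N)} (hA : LabCvx D A)
    {h : ι → EN N → ℂ} (hh : ∀ i, DifferentiableOn ℂ (h i) D) (c : ι → ℝ) (s : Finset ι) :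
    LabCvx D {z ∈ A | ∀ i ∈ s, (h i z).re ≤ c i} := by
  classical
  induction s using Finset.induction_on with
  | empty => simpa using hA
  | insert a s ha ih =>
    have := ih.inter_re_le (hh a) (c a)
    convert this using 1
    ext z
    simp only [Finset.mem_insert, forall_eq_or_imp, Set.mem_ofPred_eq]
    tauto

/-- The holomorphic function whose real part is the affine function `labA`. -/
noncomputable def labH {N : ℕ} {ι : Type} [Fintype ι] (X : ι → EN N → ℂ) (p : ι → ℝ) :
    EN N → ℂ := fun z => ∑ i, ((2 * p i : ℝ) * X i z - ((p i ^ 2 : ℝ) : ℂ))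

lemma labH_re {N : ℕ} {ι : Type} [Fintype ι] (X : ι → EN N → ℂ) (p : ι → ℝ) (z : EN N) :
    (labH X p z).re = labA p (fun i => (X i z).re) := by
  rw [labH, labA, Complex.re_sum]
  refine Finset.sum_congr rfl fun i _ => ?_
  rw [Complex.sub_re, Complex.re_ofReal_mul, Complex.ofReal_re]

lemma labH_diff {N : ℕ} {ι : Type} [Fintype ι] {D : Set (EN N)} {X : ι → EN N → ℂ}
    (hX : ∀ i, DifferentiableOn ℂ (X i) D) (p : ι → ℝ) : DifferentiableOn ℂ (labH X p) D := by
  unfold labH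
  exact DifferentiableOn.fun_sum fun i _ => ((hX i).const_mul _).sub_const _

lemma labWall_cvx {N : ℕ} {ι : Type} [Fintype ι] {D L : Set (EN N)} (hL : LabCvx D L)
    {X : ι → EN N → ℂ} (hX : ∀ i, DifferentiableOn ℂ (X i) D) (q : ℕ) (e : ℝ) (l : ℕ)
    (n : ι → ℤ) : LabCvx D (labWall L X q e l n) := by
  have h1 := hL.inter_re_le_finset hX (fun i => labP q l n i + (1 / 2 - 1 / (4 * q))) Finset.univ
  have h2 := h1.inter_re_le_finset (h := fun i => -X i) (fun i => (hX i).neg)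
    (fun i => -(labP q l n i - (1 / 2 - 1 / (4 * q)))) Finset.univ
  have h3 := h2.inter_re_le (labH_diff hX (labP q l n)) (e + q * (l + 1))
  have h4 := h3.inter_re_le (labH_diff hX (labP q l n)).neg (-(e + q * (l + 1)))
  convert h4 using 1
  ext z
  simp only [labWall, Set.mem_ofPred_eq, Finset.mem_univ, forall_true_left, Pi.neg_apply,
    Complex.neg_re, labH_re, neg_le_neg_iff, abs_le]
  constructor
  · rintro ⟨a, b, c⟩
    exact ⟨⟨⟨⟨a, fun i => by linarith [(b i).2]⟩, fun i => by linarith [(b i).1]⟩, c.le⟩, c.ge⟩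
  · rintro ⟨⟨⟨⟨a, b⟩, b'⟩, c⟩, c'⟩
    exact ⟨a, fun i => ⟨by linarith [b' i], by linarith [b i]⟩, le_antisymm c c'⟩

lemma labWall_sum_le {N : ℕ} {ι : Type} [Fintype ι] {L : Set (EN N)}
    {X : ι → EN N → ℂ} {q : ℕ} {e : ℝ} {l : ℕ}
    {n : ι → ℤ} {z : EN N} (hz : z ∈ labWall L X q e l n) :
    ∑ i, (X i z).re ^ 2 ≤ e + q * (l + 1) + (Fintype.card ι : ℝ) / 4 := by
  rw [← hz.2.2]
  refine lab_sum_le _ _ fun i => (hz.2.1 i).trans ?_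
  have : (0 : ℝ) ≤ 1 / (4 * q) := by positivity
  linarith

lemma labWall_le_sum {N : ℕ} {ι : Type} [Fintype ι] {L : Set (EN N)}
    {X : ι → EN N → ℂ} {q : ℕ} {e : ℝ} {l : ℕ}
    {n : ι → ℤ} {z : EN N} (hz : z ∈ labWall L X q e l n) :
    e + q * (l + 1) ≤ ∑ i, (X i z).re ^ 2 := by
  rw [← hz.2.2]
  exact labA_le _ _

/-- Adding all the walls keeps `𝒪(D)`-convexity. -/
lemma lab_walls_cvx {N : ℕ} {ι : Type} [Fintype ι] {D L A : Set (EN N)} (hL : LabCvx D L)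
    {X : ι → EN N → ℂ} (hX : ∀ i, DifferentiableOn ℂ (X i) D) (e : ℝ)
    {q : ℕ} (hq : q = Fintype.card ι + 1)
    (hA : LabCvx D A) (hAe : ∀ z ∈ A, ∑ i, (X i z).re ^ 2 ≤ e)
    (box : Finset (ι → ℤ)) (T : ℕ) :
    LabCvx D (A ∪ ⋃ l ∈ Finset.range T, ⋃ n ∈ box, labWall L X q e l n) := by
  classical
  have hq1 : (1 : ℝ) ≤ q := by rw [hq]; push_cast; linarith [Nat.cast_nonneg (α := ℝ) (Fintype.card ι)]
  have hinv : 2 * (1 / (4 * (q : ℝ))) ≤ 1 / 2 := by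
    rw [mul_one_div, div_le_div_iff₀ (by positivity) (by norm_num)]
    linarith
  have hinv0 : 0 < 1 / (4 * (q : ℝ)) := by positivity
  have hcard : (Fintype.card ι : ℝ) = q - 1 := by rw [hq]; push_cast; ring
  induction T with
  | zero => simpa using hA
  | succ T ih =>
    set A' := A ∪ ⋃ l ∈ Finset.range T, ⋃ n ∈ box, labWall L X q e l n with hA'
    have hsum : ∀ z ∈ A', ∑ i, (X i z).re ^ 2 ≤ e + q * (T + 1) - 2 * (1 / (4 * (q : ℝ))) := by
      rintro z (hz | hz)
      · have := hAe z hz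
        nlinarith [Nat.cast_nonneg (α := ℝ) T]
      · simp only [mem_iUnion, Finset.mem_range] at hz
        obtain ⟨l, hl, n, hn, hz⟩ := hz
        have h1 := labWall_sum_le hz
        have h2 : (l : ℝ) + 1 ≤ T := by exact_mod_cast hl
        rw [hcard] at h1
        nlinarith
    have main : ∀ s : Finset (ι → ℤ), LabCvx D (A' ∪ ⋃ n ∈ s, labWall L X q e T n) := by
      intro s
      induction s using Finset.induction_on with
      | empty => simpa using ih
      | insert a s ha ihs =>
        have h1 := ihs.union (labWall_cvx hL hX q e T a) (labH_diff hX (labP q T a))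
          (c₁ := e + q * (T + 1) - 2 * (1 / (4 * (q : ℝ)))) (c₂ := e + q * (T + 1))
          (by linarith) ?_ ?_
        · convert h1 using 1
          rw [Finset.set_biUnion_insert, union_comm (labWall L X q e T a), ← union_assoc]
        · rintro w (hw | hw)
          · rw [labH_re]
            exact (labA_le _ _).trans (hsum w hw)
          · simp only [mem_iUnion] at hw
            obtain ⟨n, hn, hw⟩ := hw
            rw [labH_re, ← hw.2.2]
            exact labA_other (n := n) (n' := a) (by rintro rfl; exact ha hn) hinv0.le _ hw.2.1
        · intro w hw
          rw [labH_re, hw.2.2]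
    convert main box using 1
    rw [hA', union_assoc, Finset.range_add_one, Finset.set_biUnion_insert,
      union_comm (⋃ n ∈ box, labWall L X q e T n)]

lemma lab_round_sq_continuous (c : ℝ) :
    Continuous fun y : ℝ => (y - ((round (y - c) : ℝ) + c)) ^ 2 := by
  have h : (fun y : ℝ => (y - ((round (y - c) : ℝ) + c)) ^ 2) =
      fun y : ℝ => ‖((y - c : ℝ) : UnitAddCircle)‖ ^ 2 := by
    funext y
    rw [UnitAddCircle.norm_eq, sq_abs]
    ring
  rw [h]
  have h1 : Continuous fun y : ℝ => ((y - c : ℝ) : UnitAddCircle) :=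
    (AddCircle.continuous_mk' (1 : ℝ)).comp (continuous_id.sub continuous_const)
  exact h1.norm.pow 2

/-- The index of the nearest point of the shifted lattice. -/
noncomputable def labR {ι : Type} (q l : ℕ) (x : ι → ℝ) (i : ι) : ℤ :=
  round (x i - ((l % q : ℕ) : ℝ) / q)

lemma labR_le {ι : Type} (q l : ℕ) (x : ι → ℝ) (i : ι) :
    |x i - labP q l (labR q l x) i| ≤ 1 / 2 := by
  have := abs_sub_round (x i - ((l % q : ℕ) : ℝ) / q)
  have h2 : x i - labP q l (labR q l x) i = x i - ((l % q : ℕ) : ℝ) / q -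
    round (x i - ((l % q : ℕ) : ℝ) / q) := by
    simp only [labP, labR]; ring
  rwa [h2]

/-- The maximum of the tangent functions over the shifted lattice. -/
noncomputable def labU {ι : Type} [Fintype ι] (q l : ℕ) (x : ι → ℝ) : ℝ :=
  labA (labP q l (labR q l x)) x

lemma labU_le {ι : Type} [Fintype ι] (q l : ℕ) (x : ι → ℝ) : labU q l x ≤ ∑ i, x i ^ 2 :=
  labA_le _ _

lemma le_labU {ι : Type} [Fintype ι] (q l : ℕ) (x : ι → ℝ) :
    ∑ i, x i ^ 2 ≤ labU q l x + (Fintype.card ι : ℝ) / 4 :=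
  lab_sum_le _ _ (labR_le q l x)

lemma labU_continuous {ι : Type} [Fintype ι] (q l : ℕ) :
    Continuous (labU q l : (ι → ℝ) → ℝ) := by
  have h : (labU q l : (ι → ℝ) → ℝ) = fun x => ∑ i, x i ^ 2 -
      ∑ i, (x i - ((round (x i - ((l % q : ℕ) : ℝ) / q) : ℝ) + ((l % q : ℕ) : ℝ) / q)) ^ 2 := by
    funext x
    rw [labU, labA_eq]
    rfl
  rw [h]
  refine Continuous.sub ?_ ?_
  · exact continuous_finsetSum _ fun i _ => (continuous_apply i).pow 2
  · exact continuous_finsetSum _ fun i _ =>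
      (lab_round_sq_continuous (((l % q : ℕ) : ℝ) / q)).comp (continuous_apply i)

/-- Monotone hitting times of the levels. -/
lemma lab_times {ι : Type} [Fintype ι] {x : ℝ → ι → ℝ} {b e : ℝ} (hb : 0 ≤ b)
    (hx : ContinuousOn x (Icc 0 b)) {q T : ℕ} (hq : q = Fintype.card ι + 1)
    (h0 : ∑ i, x 0 i ^ 2 ≤ e)
    (h1 : e + q * T + (Fintype.card ι : ℝ) / 4 ≤ ∑ i, x b i ^ 2) :
    ∃ τ : ℕ → ℝ, Monotone τ ∧ (∀ l, τ l ∈ Icc 0 b) ∧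
      ∀ l < T, labU q l (x (τ l)) = e + q * (l + 1) := by
  have hcard : (Fintype.card ι : ℝ) = q - 1 := by rw [hq]; push_cast; ring
  have hq1 : (1 : ℝ) ≤ q := by
    rw [hq]; push_cast; linarith [Nat.cast_nonneg (α := ℝ) (Fintype.card ι)]
  let S : ℕ → Set ℝ := fun l => {t ∈ Icc 0 b | e + q * ((l : ℝ) + 1) ≤ labU q l (x t)} ∪ {b}
  have hcont : ∀ l, ContinuousOn (fun t => labU q l (x t)) (Icc 0 b) := fun l =>
    (labU_continuous q l).comp_continuousOn hx
  have hScl : ∀ l, IsClosed (S l) := by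
    intro l
    refine IsClosed.union ?_ isClosed_singleton
    exact (hcont l).preimage_isClosed_of_isClosed isClosed_Icc isClosed_Ici
  have hSsub : ∀ l, S l ⊆ Icc 0 b := by
    rintro l t (ht | ht)
    · exact ht.1
    · rw [mem_singleton_iff.1 ht]; exact ⟨hb, le_rfl⟩
  have hbS : ∀ l, b ∈ S l := fun l => Or.inr rfl
  have hbdd : ∀ l, BddBelow (S l) := fun l => ⟨0, fun t ht => (hSsub l ht).1⟩
  have hmem : ∀ l, sInf (S l) ∈ S l := fun l => (hScl l).csInf_mem ⟨b, hbS l⟩ (hbdd l)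
  refine ⟨fun l => sInf (S l), ?_, fun l => hSsub l (hmem l), ?_⟩
  · refine monotone_nat_of_le_succ fun l => csInf_le_csInf (hbdd l) ⟨b, hbS _⟩ ?_
    rintro t (ht | ht)
    · refine Or.inl ⟨ht.1, ?_⟩
      have h2 := ht.2
      have h3 := labU_le q (l + 1) (x t)
      have h4 := le_labU q l (x t)
      push_cast at h2
      nlinarith
    · exact Or.inr ht
  · intro l hl
    have hlT : (l : ℝ) + 1 ≤ T := by exact_mod_cast hl
    have hbl : e + q * ((l : ℝ) + 1) ≤ labU q l (x b) := by
      have := le_labU q l (x b)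
      nlinarith
    have hge : e + q * ((l : ℝ) + 1) ≤ labU q l (x (sInf (S l))) := by
      rcases hmem l with h | h
      · exact h.2
      · rw [mem_singleton_iff.1 h]; exact hbl
    have hτ := hSsub l (hmem l)
    refine le_antisymm ?_ hge
    have h0l : labU q l (x 0) ≤ e + q * ((l : ℝ) + 1) := by
      have := labU_le q l (x 0)
      have : (0 : ℝ) ≤ q * ((l : ℝ) + 1) := by positivity
      linarith
    obtain ⟨t, ht, hteq⟩ := intermediate_value_Icc hτ.1
      ((hcont l).mono (Icc_subset_Icc_right hτ.2)) ⟨h0l, hge⟩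
    have h5 : sInf (S l) ≤ t :=
      csInf_le (hbdd l) (Or.inl ⟨⟨ht.1, ht.2.trans hτ.2⟩, hteq.ge⟩)
    have h6 : t = sInf (S l) := le_antisymm ht.2 h5
    show labU q l (x (sInf (S l))) ≤ _
    rw [← h6]
    exact hteq.le

lemma lab_frac {q : ℕ} (hq : 0 < q) {a : ℝ} {n : ℤ} {j : ℕ} (h1 : |a - (n + (j : ℝ) / q)| ≤ 1 / 2)
    (h2 : 1 / 2 - 1 / (4 * (q : ℝ)) < |a - (n + (j : ℝ) / q)|) :
    ∃ k : ℤ, |q * a - q * k - q / 2 - j| ≤ 1 / 4 := by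
  have hq' : (0 : ℝ) < q := by exact_mod_cast hq
  have hw : ∃ w : ℝ, w = a - (n + (j : ℝ) / q) := ⟨_, rfl⟩
  obtain ⟨w, hw⟩ := hw
  rw [← hw] at h1 h2
  have ha : q * a = q * w + q * n + j := by rw [hw]; field_simp; ring
  have hs : ∀ v : ℝ, v ≤ 1 / 2 → 1 / 2 - 1 / (4 * (q : ℝ)) < v → q / 2 - 1 / 4 ≤ q * v ∧ q * v ≤ q / 2 := by
    intro v hv1 hv2
    constructor
    · have h3 := mul_lt_mul_of_pos_left hv2 hq'
      have h4 : (q : ℝ) * (1 / 2 - 1 / (4 * q)) = q / 2 - 1 / 4 := by field_simp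
      linarith
    · nlinarith
  rcases abs_cases w with ⟨hc, _⟩ | ⟨hc, _⟩
  · rw [hc] at h1 h2
    obtain ⟨h5, h6⟩ := hs w h1 h2
    refine ⟨n, ?_⟩
    rw [abs_le]
    constructor <;> linarith
  · rw [hc] at h1 h2
    obtain ⟨h5, h6⟩ := hs (-w) h1 h2
    refine ⟨n - 1, ?_⟩
    rw [abs_le]
    push_cast
    constructor <;> nlinarith

lemma lab_frac_sep {q : ℕ} {a a' : ℝ} {k k' : ℤ} {j j' : ℕ} (hj : j < q) (hj' : j' < q)
    (hne : j ≠ j') (h : |q * a - q * k - q / 2 - j| ≤ 1 / 4)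
    (h' : |q * a' - q * k' - q / 2 - j'| ≤ 1 / 4) : 1 / (2 * (q : ℝ)) ≤ |a - a'| := by
  have hq' : (0 : ℝ) < q := by exact_mod_cast (Nat.zero_le _).trans_lt hj
  have hz : (q : ℤ) * (k - k') + (j - j') ≠ 0 := by
    intro h0
    have hd : (q : ℤ) ∣ (j : ℤ) - j' := ⟨-(k - k'), by linarith⟩
    have hlt : |(j : ℤ) - j'| < q := by rw [abs_lt]; constructor <;> omega
    have := Int.eq_zero_of_abs_lt_dvd hd hlt
    omega
  have h1 : (1 : ℝ) ≤ |(q : ℝ) * (k - k') + (j - j')| := by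
    have := Int.one_le_abs hz
    exact_mod_cast this
  have h2 : (q : ℝ) * (k - k') + (j - j') = q * (a - a') -
    (q * a - q * k - q / 2 - j) + (q * a' - q * k' - q / 2 - j') := by ring
  have h3 : |(q : ℝ) * (k - k') + (j - j')| ≤ q * |a - a'| + 1 / 4 + 1 / 4 := by
    rw [h2]
    refine (abs_add_le _ _).trans (add_le_add ((abs_sub _ _).trans (add_le_add ?_ h)) h')
    rw [abs_mul, abs_of_pos hq']
  rw [div_le_iff₀ (by positivity)]
  linarith

lemma lab_block {N : ℕ} {σ : ℝ → EN N} {τ : ℕ → ℝ} {a n : ℕ} {δ : ℝ≥0∞} {l l' : ℕ}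
    (hl : l ∈ Finset.Ico a (a + n)) (hl' : l' ∈ Finset.Ico a (a + n)) (hll : l ≤ l')
    (h : δ ≤ edist (σ (τ l)) (σ (τ l'))) :
    δ ≤ ∑ k ∈ Finset.Ico a (a + n), edist (σ (τ (k + 1))) (σ (τ k)) := by
  refine h.trans ((edist_le_Ico_sum_edist (fun k => σ (τ k)) hll).trans ?_)
  simp only [Finset.mem_Ico] at hl hl'
  refine (Finset.sum_le_sum_of_subset (Finset.Ico_subset_Ico hl.1 hl'.2.le)).trans ?_
  exact (Finset.sum_congr rfl fun k _ => edist_comm _ _).le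

lemma lab_blocks {N : ℕ} {σ : ℝ → EN N} {τ : ℕ → ℝ} {q : ℕ} {δ : ℝ≥0∞} (m : ℕ)
    (h : ∀ b < m, δ ≤ ∑ k ∈ Finset.Ico (b * q) (b * q + q), edist (σ (τ (k + 1))) (σ (τ k))) :
    (m : ℝ≥0∞) * δ ≤ ∑ k ∈ Finset.range (m * q), edist (σ (τ (k + 1))) (σ (τ k)) := by
  induction m with
  | zero => simp
  | succ m ih =>
    have h1 := ih fun b hb => h b (hb.trans (Nat.lt_succ_self m))
    have h2 := h m (Nat.lt_succ_self m)
    rw [Finset.range_eq_Ico] at h1 ⊢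
    rw [Nat.succ_mul, ← Finset.sum_Ico_consecutive _ (Nat.zero_le (m * q)) (Nat.le_add_right _ _)]
    push_cast
    rw [add_mul, one_mul]
    exact add_le_add h1 h2

/-- A path through the walls is long. -/
lemma lab_long {N : ℕ} {ι : Type} [Fintype ι] {L : Set (EN N)} {X : ι → EN N → ℂ}
    (hXc : ∀ i, ContinuousOn (X i) L) {C : ℝ} (hC : 0 < C)
    (hXl : ∀ i, ∀ z ∈ L, ∀ w ∈ L, ‖X i z - X i w‖ ≤ C * dist z w)
    {q m : ℕ} (hq : q = Fintype.card ι + 1) {e : ℝ} (box : Finset (ι → ℤ))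
    (hbox : ∀ l, ∀ z ∈ L, labR q l (fun i => (X i z).re) ∈ box)
    {σ : ℝ → EN N} {b : ℝ} (hb0 : 0 ≤ b) (hb1 : b ≤ 1) (hσ : ContinuousOn σ (Icc 0 b))
    (hσL : ∀ t ∈ Icc 0 b, σ t ∈ L)
    (h0 : ∑ i, (X i (σ 0)).re ^ 2 ≤ e)
    (h1 : e + q * (m * q : ℕ) + (Fintype.card ι : ℝ) / 4 ≤ ∑ i, (X i (σ b)).re ^ 2)
    (hav : ∀ t ∈ Icc 0 b, σ t ∉ ⋃ l ∈ Finset.range (m * q), ⋃ n ∈ box, labWall L X q e l n) :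
    ENNReal.ofReal (m * (1 / (2 * q) / C)) ≤ eVariationOn σ (Icc (0:ℝ) 1) := by
  classical
  have hq0 : 0 < q := by omega
  obtain ⟨τ, hmono, hτ, hlev⟩ := lab_times (x := fun t i => (X i (σ t)).re) hb0
    (continuousOn_pi.2 fun i => Complex.continuous_re.comp_continuousOn
      ((hXc i).comp hσ fun t ht => hσL t ht)) hq h0 h1
  have hex : ∀ l < m * q, ∃ i, ∃ k : ℤ,
      |q * (X i (σ (τ l))).re - q * k - q / 2 - ((l % q : ℕ) : ℝ)| ≤ 1 / 4 := by
    intro l hl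
    have hnot := hav (τ l) (hτ l)
    simp only [mem_iUnion, Finset.mem_range, not_exists] at hnot
    have h2 := hnot l hl _ (hbox l _ (hσL _ (hτ l)))
    have h3 : ∃ i, 1 / 2 - 1 / (4 * (q : ℝ)) < |(X i (σ (τ l))).re -
        labP q l (labR q l fun i => (X i (σ (τ l))).re) i| := by
      by_contra hcon
      push Not at hcon
      exact h2 ⟨hσL _ (hτ l), hcon, hlev l hl⟩
    obtain ⟨i, hi⟩ := h3
    exact ⟨i, lab_frac hq0 (labR_le q l (fun i => (X i (σ (τ l))).re) i) hi⟩
  have hpair : ∀ l < m * q, ∀ l' < m * q, l % q ≠ l' % q → ∀ i, (∃ k : ℤ,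
      |q * (X i (σ (τ l))).re - q * k - q / 2 - ((l % q : ℕ) : ℝ)| ≤ 1 / 4) → (∃ k : ℤ,
      |q * (X i (σ (τ l'))).re - q * k - q / 2 - ((l' % q : ℕ) : ℝ)| ≤ 1 / 4) →
      ENNReal.ofReal (1 / (2 * q) / C) ≤ edist (σ (τ l)) (σ (τ l')) := by
    rintro l hl l' hl' hne i ⟨k, hk⟩ ⟨k', hk'⟩
    have h2 := lab_frac_sep (Nat.mod_lt _ hq0) (Nat.mod_lt _ hq0) hne hk hk'
    rw [edist_dist]
    refine ENNReal.ofReal_le_ofReal ?_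
    rw [div_le_iff₀ hC, mul_comm (dist _ _) C]
    refine h2.trans (le_trans ?_ (hXl i _ (hσL _ (hτ l)) _ (hσL _ (hτ l'))))
    rw [← Complex.sub_re]
    exact Complex.abs_re_le_norm _
  have hblock : ∀ a < m, ENNReal.ofReal (1 / (2 * q) / C) ≤
      ∑ k ∈ Finset.Ico (a * q) (a * q + q), edist (σ (τ (k + 1))) (σ (τ k)) := by
    intro a ha
    have hlt : ∀ j : Fin q, a * q + j < m * q := by
      intro j
      have := Nat.mul_le_mul_right q (Nat.succ_le_of_lt ha)
      rw [Nat.succ_mul] at this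
      have := j.2
      omega
    choose f hf using fun j : Fin q => hex _ (hlt j)
    obtain ⟨j, j', hne, hff⟩ := Fintype.exists_ne_map_eq_of_card_lt f (by simp [hq])
    have hmod : ∀ j : Fin q, (a * q + j) % q = j := fun j => by
      rw [mul_comm, Nat.mul_add_mod, Nat.mod_eq_of_lt j.2]
    have hmem : ∀ j : Fin q, a * q + (j : ℕ) ∈ Finset.Ico (a * q) (a * q + q) := fun j => by
      have := j.2
      simp only [Finset.mem_Ico]
      omega
    have hne' : (j : ℕ) ≠ j' := fun h => hne (Fin.ext h)
    have hd := hpair _ (hlt j) _ (hlt j') (by rw [hmod, hmod]; exact hne') (f j) (hf j)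
      (by rw [hff]; exact hf j')
    rcases le_total (j : ℕ) j' with hle | hle
    · exact lab_block (hmem j) (hmem j') (by omega) hd
    · rw [edist_comm] at hd
      exact lab_block (hmem j') (hmem j) (by omega) hd
  have hfin := lab_blocks m hblock
  rw [ENNReal.ofReal_mul (Nat.cast_nonneg m), ENNReal.ofReal_natCast]
  refine hfin.trans (eVariationOn.sum_le hmono fun l => ?_)
  exact ⟨(hτ l).1, (hτ l).2.trans hb1⟩

/-- Holomorphic functions are Lipschitz on compact sets. -/
lemma lab_lip {N : ℕ} {D L : Set (EN N)} (hD : IsOpen D) (hL : IsCompact L) (hLD : L ⊆ D)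
    {f : EN N → ℂ} (hf : DifferentiableOn ℂ f D) :
    ∃ C : ℝ, 0 ≤ C ∧ ∀ z ∈ L, ∀ w ∈ L, ‖f z - f w‖ ≤ C * dist z w := by
  have hloc : LocallyLipschitzOn L f := by
    intro x hx
    have hcont : ContinuousAt f x := hf.continuousOn.continuousAt (hD.mem_nhds (hLD hx))
    obtain ⟨r₁, hr₁, h1⟩ := Metric.isOpen_iff.1 hD x (hLD hx)
    obtain ⟨r₂, hr₂, h2⟩ := Metric.continuousAt_iff.1 hcont 1 one_pos
    set r := min r₁ r₂ with hr
    have hr0 : 0 < r := lt_min hr₁ hr₂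
    refine ⟨⟨2 / (r / 2), by positivity⟩, ball x (r / 4),
      mem_nhdsWithin_of_mem_nhds (ball_mem_nhds _ (by positivity)), ?_⟩
    refine LipschitzOnWith.of_dist_le_mul fun w hw z hz => ?_
    rw [mem_ball] at hw hz
    have hsub : ball z (r / 2) ⊆ ball x r := by
      intro y hy
      rw [mem_ball] at hy ⊢
      linarith [dist_triangle y z x]
    have hmaps : MapsTo f (ball z (r / 2)) (closedBall (f z) 2) := by
      intro y hy
      have h3 := h2 (lt_of_lt_of_le (mem_ball.1 (hsub hy)) (min_le_right _ _))
      have h4 : dist (f z) (f x) < 1 :=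
        h2 (lt_of_lt_of_le (by linarith : dist z x < r) (min_le_right _ _))
      rw [mem_closedBall]
      have := dist_triangle_right (f y) (f z) (f x)
      linarith
    refine Complex.dist_le_div_mul_dist_of_mapsTo_ball
      (hf.mono (hsub.trans ((ball_subset_ball (min_le_left _ _)).trans h1))) hmaps ?_
    rw [mem_ball]
    linarith [dist_triangle_right w z x]
  obtain ⟨C, hC⟩ := hloc.exists_lipschitzOnWith_of_compact hL
  refine ⟨C, C.2, fun z hz w hw => ?_⟩
  rw [← dist_eq_norm]
  exact hC.dist_le_mul z hz w hw

/-- Finitely many functions separating `K` from a compact set. -/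
lemma lab_funs {N : ℕ} {D K F : Set (EN N)} (hD : IsOpen D) (hK : LabCvx D K) (hF : IsCompact F)
    (hFD : F ⊆ D) (hFK : Disjoint F K) :
    ∃ (κ : Type) (_ : Fintype κ) (f : κ → EN N → ℂ), (∀ j, DifferentiableOn ℂ (f j) D) ∧
      (∀ z ∈ K, ∑ j, ‖f j z‖ ^ 2 ≤ 1 / 4) ∧ ∀ z ∈ F, 1 ≤ ∑ j, ‖f j z‖ ^ 2 := by
  classical
  have h1 : ∀ z, ∃ g : EN N → ℂ, ∃ r : ℝ, DifferentiableOn ℂ g D ∧ 0 ≤ r ∧ r < 1 ∧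
      (∀ w ∈ K, ‖g w‖ ≤ r) ∧ (z ∈ F → 1 < ‖g z‖) := by
    intro z
    by_cases hz : z ∈ F
    · obtain ⟨φ, hφ, c, hc0, hcK, hcz⟩ := hK.2.2 z (hFD hz) (disjoint_left.1 hFK hz)
      set a : ℝ := (c + ‖φ z‖) / 2 with ha
      have ha0 : 0 < a := by linarith
      refine ⟨fun w => φ w / (a : ℂ), c / a, ?_, by positivity, ?_, ?_, ?_⟩
      · simp only [div_eq_mul_inv]
        exact hφ.mul_const _
      · rw [div_lt_one ha0]; linarith
      · intro w hw
        rw [norm_div, Complex.norm_real, Real.norm_of_nonneg ha0.le]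
        exact div_le_div_of_nonneg_right (hcK w hw) ha0.le
      · intro _
        rw [norm_div, Complex.norm_real, Real.norm_of_nonneg ha0.le, one_lt_div ha0]
        linarith
    · exact ⟨fun _ => 0, 0, differentiableOn_const _, le_rfl, one_pos, by simp, fun h => absurd h hz⟩
  choose g r hg hr0 hr1 hgK hgF using h1
  obtain ⟨t, htF, htcov⟩ := hF.elim_nhds_subcover (fun z => {w | 1 < ‖g z w‖}) (by
    intro z hz
    have hc : ContinuousAt (g z) z := (hg z).continuousOn.continuousAt (hD.mem_nhds (hFD hz))
    exact hc.norm.eventually_const_lt (hgF z hz))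
  have htend : Tendsto (fun n : ℕ => ∑ z ∈ t, (r z ^ 2) ^ n) atTop (𝓝 (∑ _z ∈ t, (0 : ℝ))) := by
    refine tendsto_finsetSum _ fun z _ => tendsto_pow_atTop_nhds_zero_of_lt_one (sq_nonneg _) ?_
    have := hr0 z
    have := hr1 z
    nlinarith
  rw [Finset.sum_const_zero] at htend
  obtain ⟨n, hn⟩ := (htend.eventually_le_const (by norm_num : (0 : ℝ) < 1 / 4)).exists
  refine ⟨t, inferInstance, fun z w => g z w ^ n, fun z => (hg z).pow n, ?_, ?_⟩
  · intro w hw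
    rw [Finset.sum_coe_sort t (fun z => ‖g z w ^ n‖ ^ 2)]
    refine le_trans (Finset.sum_le_sum fun z _ => ?_) hn
    rw [norm_pow, ← pow_mul, ← pow_mul, mul_comm n 2]
    exact pow_le_pow_left₀ (norm_nonneg _) (hgK z w hw) _
  · intro w hw
    rw [Finset.sum_coe_sort t (fun z => ‖g z w ^ n‖ ^ 2)]
    obtain ⟨z, hz, hzw⟩ : ∃ z ∈ t, 1 < ‖g z w‖ := by simpa using htcov hw
    refine le_trans ?_ (Finset.single_le_sum (fun z _ => sq_nonneg _) hz)
    rw [norm_pow, ← pow_mul]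
    exact one_le_pow₀ hzw.le

/-- The real coordinates. -/
noncomputable def labX {N : ℕ} {κ : Type} (E : ℝ) (f : κ → EN N → ℂ) : κ ⊕ κ → EN N → ℂ
  | Sum.inl j => fun z => (E : ℂ) * f j z
  | Sum.inr j => fun z => -((E : ℂ) * Complex.I) * f j z

lemma labX_diff {N : ℕ} {κ : Type} {D : Set (EN N)} (E : ℝ) {f : κ → EN N → ℂ}
    (hf : ∀ j, DifferentiableOn ℂ (f j) D) (i : κ ⊕ κ) : DifferentiableOn ℂ (labX E f i) D := by
  cases i with
  | inl j => exact (hf j).const_mul _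
  | inr j => exact (hf j).const_mul _

lemma labX_sum {N : ℕ} {κ : Type} [Fintype κ] (E : ℝ) (f : κ → EN N → ℂ) (z : EN N) :
    ∑ i, (labX E f i z).re ^ 2 = E ^ 2 * ∑ j, ‖f j z‖ ^ 2 := by
  rw [Fintype.sum_sum_type, ← Finset.sum_add_distrib, Finset.mul_sum]
  refine Finset.sum_congr rfl fun j _ => ?_
  rw [← Complex.normSq_eq_norm_sq, Complex.normSq_apply]
  simp [labX]
  ring

lemma labX_lip {N : ℕ} {κ : Type} {E : ℝ} (hE : 0 ≤ E) (f : κ → EN N → ℂ) {L : Set (EN N)} {C : ℝ}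
    (hC : ∀ j, ∀ z ∈ L, ∀ w ∈ L, ‖f j z - f j w‖ ≤ C * dist z w) (i : κ ⊕ κ) :
    ∀ z ∈ L, ∀ w ∈ L, ‖labX E f i z - labX E f i w‖ ≤ E * C * dist z w := by
  intro z hz w hw
  have h : ∀ j, E * ‖f j z - f j w‖ ≤ E * C * dist z w := fun j => by
    rw [mul_assoc]
    exact mul_le_mul_of_nonneg_left (hC j z hz w hw) hE
  cases i with
  | inl j =>
    refine le_trans (le_of_eq ?_) (h j)
    simp only [labX]
    rw [← mul_sub, norm_mul, Complex.norm_real, Real.norm_of_nonneg hE]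
  | inr j =>
    refine le_trans (le_of_eq ?_) (h j)
    simp only [labX]
    rw [← mul_sub, norm_mul, norm_neg, norm_mul, Complex.norm_real, Real.norm_of_nonneg hE,
      Complex.norm_I, mul_one]

/-- A finite box containing all the relevant lattice points. -/
lemma lab_box {N : ℕ} {ι : Type} [Fintype ι] {L : Set (EN N)} (hL : IsCompact L)
    {X : ι → EN N → ℂ} (hX : ∀ i, ContinuousOn (X i) L) {q : ℕ} (hq : 0 < q) :
    ∃ box : Finset (ι → ℤ), ∀ l, ∀ z ∈ L, labR q l (fun i => (X i z).re) ∈ box := by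
  classical
  choose b hb0 hb using fun i => lab_bdd hL (hX i)
  refine ⟨Fintype.piFinset fun i => Finset.Icc (-⌈b i + 2⌉) ⌈b i + 2⌉, fun l z hz => ?_⟩
  rw [Fintype.mem_piFinset]
  intro i
  rw [Finset.mem_Icc, ← abs_le]
  have h1 : |(X i z).re| ≤ b i := (Complex.abs_re_le_norm _).trans (hb i z hz)
  have h2 := labR_le q l (fun i => (X i z).re) i
  have hq' : (0 : ℝ) < q := by exact_mod_cast hq
  have h3 : |((l % q : ℕ) : ℝ) / q| ≤ 1 := by
    rw [abs_of_nonneg (by positivity), div_le_one hq']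
    exact_mod_cast (Nat.mod_lt l hq).le
  have h4 : |((labR q l (fun i => (X i z).re) i : ℤ) : ℝ)| ≤ b i + 2 := by
    simp only [labP] at h2
    rw [abs_le] at h1 h2 h3 ⊢
    constructor <;> linarith
  have h5 : ((|labR q l (fun i => (X i z).re) i| : ℤ) : ℝ) ≤ (⌈b i + 2⌉ : ℝ) := by
    rw [Int.cast_abs]
    exact h4.trans (Int.le_ceil _)
  exact_mod_cast h5

/-- First exit from an open set. -/
lemma lab_exit {N : ℕ} {U : Set (EN N)} (hU : IsOpen U) {σ : ℝ → EN N}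
    (hσ : ContinuousOn σ (Icc (0:ℝ) 1)) (h0 : σ 0 ∈ U) (h1 : σ 1 ∉ U) :
    ∃ b, 0 ≤ b ∧ b ≤ 1 ∧ σ b ∈ frontier U ∧ ∀ t ∈ Icc 0 b, σ t ∈ closure U := by
  set S : Set ℝ := {t ∈ Icc (0:ℝ) 1 | σ t ∈ Uᶜ} with hS
  have hcl : IsClosed S := hσ.preimage_isClosed_of_isClosed isClosed_Icc hU.isClosed_compl
  have hne : S.Nonempty := ⟨1, ⟨zero_le_one, le_rfl⟩, h1⟩
  have hbdd : BddBelow S := ⟨0, fun t ht => ht.1.1⟩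
  have hmem := hcl.csInf_mem hne hbdd
  set b := sInf S with hb
  have hlt : ∀ t ∈ Ico 0 b, σ t ∈ U := by
    intro t ht
    by_contra hcon
    exact absurd (csInf_le hbdd ⟨⟨ht.1, ht.2.le.trans hmem.1.2⟩, hcon⟩) (not_le.2 ht.2)
  have hb0 : 0 < b := by
    rcases hmem.1.1.eq_or_lt with h | h
    · exact absurd (h ▸ h0) hmem.2
    · exact h
  have hbcl : σ b ∈ closure U := by
    have hc : ContinuousWithinAt σ (Ico 0 b) b :=
      (hσ b hmem.1).mono (Ico_subset_Icc_self.trans (Icc_subset_Icc_right hmem.1.2))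
    refine hc.mem_closure ?_ hlt
    rw [closure_Ico hb0.ne]
    exact ⟨hb0.le, le_rfl⟩
  refine ⟨b, hb0.le, hmem.1.2, ?_, ?_⟩
  · rw [frontier, hU.interior_eq]
    exact ⟨hbcl, hmem.2⟩
  · intro t ht
    rcases ht.2.eq_or_lt with h | h
    · rw [h]; exact hbcl
    · exact subset_closure (hlt t ⟨ht.1, h⟩)

/-- One step of the labyrinth. -/
lemma lab_step {N : ℕ} {D K U : Set (EN N)} (hD : IsOpen D) (hU : IsOpen U) (hKU : K ⊆ U)
    (hK : LabCvx D K) (hL : LabCvx D (closure U)) (M : ℝ) :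
    ∃ Γ : Set (EN N), IsCompact Γ ∧ Γ ⊆ U \ K ∧
      (∀ A ⊆ K, LabCvx D A → LabCvx D (A ∪ Γ)) ∧
      ∀ σ : ℝ → EN N, ContinuousOn σ (Icc (0:ℝ) 1) → σ 0 ∈ K → σ 1 ∉ U →
        (∀ t ∈ Icc (0:ℝ) 1, σ t ∉ Γ) → ENNReal.ofReal M < eVariationOn σ (Icc (0:ℝ) 1) := by
  classical
  have hFc : IsCompact (frontier U) := hL.1.of_isClosed_subset isClosed_frontier frontier_subset_closure
  have hFU : Disjoint (frontier U) K := by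
    rw [frontier, hU.interior_eq, disjoint_left]
    exact fun z hz hzK => hz.2 (hKU hzK)
  obtain ⟨κ, _, f, hf, hfK, hfF⟩ := lab_funs hD hK hFc (frontier_subset_closure.trans hL.2.1) hFU
  choose C₀ hC₀ hfC₀ using fun j => lab_lip hD hL.1 hL.2.1 (hf j)
  set C : ℝ := ∑ j, C₀ j + 1 with hC
  have hCpos : 0 < C := by
    have : 0 ≤ ∑ j, C₀ j := Finset.sum_nonneg fun j _ => hC₀ j
    linarith
  have hfC : ∀ j, ∀ z ∈ closure U, ∀ w ∈ closure U, ‖f j z - f j w‖ ≤ C * dist z w := by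
    intro j z hz w hw
    refine (hfC₀ j z hz w hw).trans (mul_le_mul_of_nonneg_right ?_ dist_nonneg)
    have := Finset.single_le_sum (f := C₀) (fun j _ => hC₀ j) (Finset.mem_univ j)
    linarith
  obtain ⟨q, hq⟩ : ∃ q : ℕ, q = Fintype.card (κ ⊕ κ) + 1 := ⟨_, rfl⟩
  have hq0 : 0 < q := by omega
  have hcard : (Fintype.card (κ ⊕ κ) : ℝ) = q - 1 := by rw [hq]; push_cast; ring
  have hq1 : (1 : ℝ) ≤ q := by exact_mod_cast hq0
  obtain ⟨R, hR⟩ := exists_nat_gt (max 1 (4 * (q : ℝ) ^ 2 * C * M))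
  have hR1 : (1 : ℝ) < R := (le_max_left _ _).trans_lt hR
  have hRM : 4 * (q : ℝ) ^ 2 * C * M < R := (le_max_right _ _).trans_lt hR
  set E : ℝ := 2 * q * R with hE
  have hE0 : 0 < E := by positivity
  set e : ℝ := (q : ℝ) ^ 2 * R ^ 2 with he
  set m : ℕ := R ^ 2 with hm
  have hmq : (q : ℝ) * ((m * q : ℕ) : ℝ) = e := by rw [hm, he]; push_cast; ring
  have hE2 : E ^ 2 = 4 * e := by rw [hE, he]; ring
  have heq : (q : ℝ) ≤ e := by
    have : (1 : ℝ) ≤ (q : ℝ) * R ^ 2 := by nlinarith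
    rw [he]; nlinarith
  have hlt : e + (q : ℝ) * ((m * q : ℕ) : ℝ) + (Fintype.card (κ ⊕ κ) : ℝ) / 4 < E ^ 2 := by
    rw [hmq, hE2, hcard]; linarith
  have hX := labX_diff E hf
  have hXc : ∀ i, ContinuousOn (labX E f i) (closure U) := fun i =>
    (hX i).continuousOn.mono hL.2.1
  obtain ⟨box, hbox⟩ := lab_box hL.1 hXc hq0
  have hsK : ∀ z ∈ K, ∑ i, (labX E f i z).re ^ 2 ≤ e := by
    intro z hz
    rw [labX_sum, hE2]
    have := hfK z hz
    nlinarith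
  have hsF : ∀ z ∈ frontier U, E ^ 2 ≤ ∑ i, (labX E f i z).re ^ 2 := by
    intro z hz
    rw [labX_sum]
    have := hfF z hz
    nlinarith [sq_nonneg E]
  refine ⟨⋃ l ∈ Finset.range (m * q), ⋃ n ∈ box, labWall (closure U) (labX E f) q e l n,
    ?_, ?_, ?_, ?_⟩
  · refine (Finset.range (m * q)).isCompact_biUnion fun l _ => box.isCompact_biUnion fun n _ => ?_
    exact (labWall_cvx hL hX q e l n).1
  · intro z hz
    simp only [mem_iUnion, Finset.mem_range] at hz
    obtain ⟨l, hl, n, -, hz⟩ := hz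
    have hlT : (l : ℝ) + 1 ≤ ((m * q : ℕ) : ℝ) := by exact_mod_cast hl
    have h1 := labWall_sum_le hz
    have h2 := labWall_le_sum hz
    constructor
    · by_contra hzU
      have hzF : z ∈ frontier U := by
        rw [frontier, hU.interior_eq]
        exact ⟨hz.1, hzU⟩
      have h3 := hsF z hzF
      nlinarith
    · intro hzK
      have h3 := hsK z hzK
      have : (0 : ℝ) < q * ((l : ℝ) + 1) := by positivity
      linarith
  · intro A hAK hA
    exact lab_walls_cvx hL hX e hq hA (fun z hz => hsK z (hAK hz)) box (m * q)
  · intro σ hσ h0 h1 hav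
    obtain ⟨b, hb0, hb1, hbF, hbcl⟩ := lab_exit hU hσ (hKU h0) h1
    have hlong := lab_long hXc (mul_pos hE0 hCpos) (labX_lip hE0.le f hfC) (m := m) hq (e := e)
      box hbox hb0 hb1 (hσ.mono (Icc_subset_Icc_right hb1)) hbcl (hsK _ h0)
      (hlt.le.trans (hsF _ hbF)) (fun t ht => hav t ⟨ht.1, ht.2.trans hb1⟩)
    refine lt_of_lt_of_le ?_ hlong
    have hval : (m : ℝ) * (1 / (2 * q) / (E * C)) = R / (4 * (q : ℝ) ^ 2 * C) := by
      rw [hm, hE]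
      push_cast
      field_simp
      ring
    rw [hval]
    rw [ENNReal.ofReal_lt_ofReal_iff (by positivity), lt_div_iff₀ (by positivity)]
    linarith


/-- **Labyrinth theorem.** Let `D` be pseudoconvex, `(D_n)` an exhaustion of `D` by strictly
pseudoconvex domains that are `𝒪(D)`-convex, and `(M_n)` positive numbers. Then there are
compact sets `Γ_n ⊆ D_{n+1} \ cl(D_n)` such that `cl(D_n) ∪ Γ_n ∪ ⋯ ∪ Γ_m` is `𝒪(D)`-convex
for every `m ≥ n`, and every continuous path connecting `bD_n` to `bD_{n+1}` omitting `Γ_n`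
has length (total variation) greater than `M_n`. -/
theorem labyrinth {N : ℕ} (D : Set (EN N)) (hD : Pseudoconvex D)
    (D' : ℕ → Set (EN N)) (hpsc : ∀ n, StrictlyPseudoconvex (D' n))
    (hconv : ∀ n, HolConvexIn D (closure (D' n)))
    (hcpt : ∀ n, IsCompact (closure (D' n)))
    (hsub : ∀ n, closure (D' n) ⊆ D' (n + 1))
    (hunion : (⋃ n, D' n) = D)
    (M : ℕ → ℝ) (hM : ∀ n, 0 < M n) :
    ∃ Γ : ℕ → Set (EN N),
      (∀ n, IsCompact (Γ n) ∧ Γ n ⊆ D' (n + 1) \ closure (D' n)) ∧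
      (∀ n m, n ≤ m → HolConvexIn D (closure (D' n) ∪ ⋃ j ∈ Icc n m, Γ j)) ∧
      ∀ n, ∀ σ : ℝ → EN N, ContinuousOn σ (Icc (0:ℝ) 1) →
        σ 0 ∈ frontier (D' n) → σ 1 ∈ frontier (D' (n + 1)) →
        (∀ t ∈ Icc (0:ℝ) 1, σ t ∉ Γ n) →
        ENNReal.ofReal (M n) < eVariationOn σ (Icc (0:ℝ) 1) := by

  have hDo : IsOpen D := hD.1.1
  have hopen : ∀ n, IsOpen (D' n) := by
    intro n
    obtain ⟨ρ, hρ⟩ := hpsc n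
    exact hρ.1.1
  have hcvx : ∀ n, LabCvx D (closure (D' n)) := fun n => (hconv n).labCvx (hcpt n)
  choose Γ hΓc hΓs hΓA hΓl using fun n =>
    lab_step hDo (hopen (n + 1)) (hsub n) (hcvx n) (hcvx (n + 1)) (M n)
  refine ⟨Γ, fun n => ⟨hΓc n, hΓs n⟩, ?_, ?_⟩
  · intro n m hnm
    suffices h : LabCvx D (closure (D' n) ∪ ⋃ j ∈ Icc n m, Γ j) ∧
        closure (D' n) ∪ ⋃ j ∈ Icc n m, Γ j ⊆ closure (D' (m + 1)) from h.1.holConvexIn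
    induction m, hnm using Nat.le_induction with
    | base =>
      simp only [Icc_self, mem_singleton_iff, iUnion_iUnion_eq_left]
      refine ⟨hΓA n _ Subset.rfl (hcvx n), union_subset ((hsub n).trans subset_closure) ?_⟩
      exact (hΓs n).trans (sdiff_subset.trans subset_closure)
    | succ m hnm ih =>
      have heq : closure (D' n) ∪ ⋃ j ∈ Icc n (m + 1), Γ j =
          (closure (D' n) ∪ ⋃ j ∈ Icc n m, Γ j) ∪ Γ (m + 1) := by
        ext z
        simp only [mem_union, mem_iUnion, mem_Icc, exists_prop]
        constructor
        · rintro (h | ⟨j, ⟨h1, h2⟩, h3⟩)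
          · exact Or.inl (Or.inl h)
          · rcases Nat.lt_or_ge m j with h4 | h4
            · obtain rfl : j = m + 1 := by omega
              exact Or.inr h3
            · exact Or.inl (Or.inr ⟨j, ⟨h1, h4⟩, h3⟩)
        · rintro ((h | ⟨j, ⟨h1, h2⟩, h3⟩) | h)
          · exact Or.inl h
          · exact Or.inr ⟨j, ⟨h1, by omega⟩, h3⟩
          · exact Or.inr ⟨m + 1, ⟨by omega, le_rfl⟩, h⟩
      rw [heq]
      refine ⟨hΓA (m + 1) _ ih.2 ih.1, union_subset ?_ ?_⟩
      · exact ih.2.trans ((hsub (m + 1)).trans subset_closure)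
      · exact (hΓs (m + 1)).trans (sdiff_subset.trans subset_closure)
  · intro n σ hσ h0 h1 hav
    refine hΓl n σ hσ (frontier_subset_closure h0) ?_ hav
    rw [frontier, (hopen (n + 1)).interior_eq] at h1
    exact h1.2
end

section
/- Let K and L be compact subsets of a pseudoconvex domain D in ℂ^N. Suppose there is f ∈ 𝒪(D) such that the polynomial hulls of f(K) and f(L) in ℂ are disjoint. Then the 𝒪(D)-hull of K ∪ L equals the union of the 𝒪(D)-hull of K and the 𝒪(D)-hull of L. -/
open Set Filter Topology Metric MeasureTheory
open scoped ENNReal NNReal InnerProductSpace ComplexConjugate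

noncomputable section

lemma frontier_comp_subset {O : Set ℂ} (hO : IsOpen O) (w : ℂ) :
    frontier (connectedComponentIn O w) ⊆ Oᶜ := by
  intro z hz hzO
  have hU : IsOpen (connectedComponentIn O w) := hO.connectedComponentIn
  have hV : IsOpen (connectedComponentIn O z) := hO.connectedComponentIn
  have hzV : z ∈ connectedComponentIn O z := mem_connectedComponentIn hzO
  obtain ⟨y, hy1, hy2⟩ := mem_closure_iff.1 hz.1 _ hV hzV
  have e1 := connectedComponentIn_eq hy1
  have e2 := connectedComponentIn_eq hy2
  rw [e2, ← e1] at hz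
  rw [hV.frontier_eq] at hz
  exact hz.2 hzV

lemma log_locally {S : Type*} [TopologicalSpace S] [CompactSpace S] (f : C(S, ℂ))
    (hf : ∀ s, f s ≠ 0) :
    ∀ᶠ f' in 𝓝 f, ((∃ g : C(S, ℂ), ∀ s, f s = Complex.exp (g s)) ↔
      (∃ g : C(S, ℂ), ∀ s, f' s = Complex.exp (g s))) := by
  have : ∃ m > 0, ∀ s, m ≤ ‖f s‖ := by
    rcases isEmpty_or_nonempty S with h | h
    · exact ⟨1, one_pos, fun s => (h.false s).elim⟩
    · obtain ⟨s, -, hs⟩ := isCompact_univ.exists_isMinOn (univ_nonempty (α := S))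
        (f := fun s => ‖f s‖) (by fun_prop)
      exact ⟨‖f s‖, norm_pos_iff.2 (hf s), fun t => hs (mem_univ t)⟩
  obtain ⟨m, hm, hmf⟩ := this
  filter_upwards [Metric.ball_mem_nhds f hm] with f' hf'
  have hd : ∀ s, f' s / f s ∈ Complex.slitPlane := by
    intro s
    have hlt : ‖f' s / f s - 1‖ < 1 → f' s / f s ∈ Complex.slitPlane := fun h => by
      simpa using Complex.mem_slitPlane_of_norm_lt_one h
    apply hlt
    rw [div_sub_one (hf s), norm_div, div_lt_one (norm_pos_iff.2 (hf s))]
    refine lt_of_lt_of_le ?_ (hmf s)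
    rw [← dist_eq_norm]
    exact (ContinuousMap.dist_apply_le_dist s).trans_lt hf'
  let l : C(S, ℂ) := ⟨fun s => Complex.log (f' s / f s),
    (f'.continuous.div f.continuous hf).clog hd⟩
  have hl : ∀ s, Complex.exp (l s) = f' s / f s := fun s =>
    Complex.exp_log (Complex.slitPlane_ne_zero (hd s))
  constructor
  · rintro ⟨g, hg⟩
    refine ⟨g + l, fun s => ?_⟩
    rw [ContinuousMap.add_apply, Complex.exp_add, hl, ← hg, mul_div_cancel₀ _ (hf s)]
  · rintro ⟨g, hg⟩
    refine ⟨g - l, fun s => ?_⟩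
    have h0 : f' s ≠ 0 := by rw [hg]; exact Complex.exp_ne_zero _
    rw [ContinuousMap.sub_apply, Complex.exp_sub, hl, ← hg]
    have := hf s
    field_simp

lemma log_path {S T : Type*} [TopologicalSpace S] [CompactSpace S] [TopologicalSpace T]
    {c : Set T} (hc : IsPreconnected c) (Φ : T → C(S, ℂ)) (hΦ : ContinuousOn Φ c)
    (h0 : ∀ t ∈ c, ∀ s, Φ t s ≠ 0) {t₀ t₁ : T} (ht₀ : t₀ ∈ c) (ht₁ : t₁ ∈ c)
    (h : ∃ g : C(S, ℂ), ∀ s, Φ t₀ s = Complex.exp (g s)) :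
    ∃ g : C(S, ℂ), ∀ s, Φ t₁ s = Complex.exp (g s) := by
  have key := hc.induction₂ (fun x y => (∃ g : C(S, ℂ), ∀ s, Φ x s = Complex.exp (g s)) ↔
    (∃ g : C(S, ℂ), ∀ s, Φ y s = Complex.exp (g s)))
    (fun x hx => (hΦ x hx).eventually (log_locally (Φ x) (h0 x hx)))
    (fun x y z _ _ _ hxy hyz => hxy.trans hyz) (fun x y _ _ hxy => hxy.symm) ht₀ ht₁
  exact key.1 h

lemma log_of_unbounded {X : Set ℂ} (hX : IsCompact X) {w : ℂ}
    (hU : ¬ Bornology.IsBounded (connectedComponentIn Xᶜ w)) (hw : w ∉ X) :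
    ∃ g : C(X, ℂ), ∀ s : X, (s : ℂ) - w = Complex.exp (g s) := by
  have := isCompact_iff_compactSpace.1 hX
  obtain ⟨R, hR⟩ := hX.isBounded.subset_closedBall 0
  have : ∃ w₁ ∈ connectedComponentIn Xᶜ w, |R| < ‖w₁‖ := by
    by_contra! hcon
    exact hU (Metric.isBounded_closedBall.subset
      (fun z hz => by simpa using hcon z hz : _ ⊆ closedBall (0:ℂ) |R|))
  obtain ⟨w₁, hw₁, hRw⟩ := this
  have hwpos : 0 < ‖w₁‖ := (abs_nonneg R).trans_lt hRw
  have hw0 : w₁ ≠ 0 := norm_pos_iff.1 hwpos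
  let Φ : ℂ → C(X, ℂ) := fun v => ⟨fun s => (s : ℂ) - v, by fun_prop⟩
  have hΦ : Continuous Φ := by
    apply ContinuousMap.continuous_of_continuous_uncurry
    show Continuous (fun p : ℂ × X => (p.2 : ℂ) - p.1)
    fun_prop
  refine log_path (T := ℂ) isPreconnected_connectedComponentIn Φ hΦ.continuousOn ?_ hw₁
    (mem_connectedComponentIn hw) ?_
  · intro v hv s hs
    have : v ∈ Xᶜ := connectedComponentIn_subset _ _ hv
    apply this
    rw [← sub_eq_zero.1 hs]; exact s.2
  · have hs : ∀ s : X, 1 - (s : ℂ) / w₁ ∈ Complex.slitPlane := by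
      intro s
      have : ‖-((s : ℂ) / w₁)‖ < 1 := by
        rw [norm_neg, norm_div, div_lt_one hwpos]
        have := hR s.2
        simp at this
        exact this.trans_lt ((le_abs_self R).trans_lt hRw)
      simpa [sub_eq_add_neg] using Complex.mem_slitPlane_of_norm_lt_one this
    refine ⟨⟨fun s => Complex.log (1 - (s : ℂ) / w₁) + Complex.log (-w₁),
      ((by fun_prop : Continuous fun s : X => 1 - (s : ℂ) / w₁).clog hs).add continuous_const⟩, ?_⟩
    intro s
    show (s : ℂ) - w₁ = Complex.exp (_ + _)
    rw [Complex.exp_add, Complex.exp_log (Complex.slitPlane_ne_zero (hs s)),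
      Complex.exp_log (neg_ne_zero.2 hw0)]
    field_simp
    ring

lemma no_circle_log {R : ℝ} (hR : 0 < R) (g : C(ℝ, ℂ)) (hper : g (2 * Real.pi) = g 0)
    (hg : ∀ θ : ℝ, (R : ℂ) * Complex.exp (θ * Complex.I) = Complex.exp (g θ)) : False := by
  have hR' : (R : ℂ) ≠ 0 := by exact_mod_cast hR.ne'
  let k : ℝ → ℝ := fun θ => ((g θ - g 0 - θ * Complex.I) / (2 * Real.pi * Complex.I)).re
  have hk : Continuous k := by
    apply Complex.continuous_re.comp
    fun_prop
  have hint : ∀ θ, ∃ n : ℤ, k θ = n := by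
    intro θ
    have : Complex.exp (g θ - g 0 - θ * Complex.I) = 1 := by
      rw [Complex.exp_sub, Complex.exp_sub, ← hg, ← hg]
      simp
      field_simp [Complex.exp_ne_zero]
    obtain ⟨n, hn⟩ := Complex.exp_eq_one_iff.1 this
    refine ⟨n, ?_⟩
    simp only [k, hn]
    rw [mul_div_assoc, div_self (by simp [Real.pi_ne_zero])]
    simp
  have h0 : k 0 = 0 := by simp [k]
  have h1 : k (2 * Real.pi) = -1 := by
    simp only [k, hper]
    have : ((g 0 - g 0 - ((2 * Real.pi : ℝ) : ℂ) * Complex.I) / (2 * Real.pi * Complex.I)) = -1 := by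
      push_cast
      rw [div_eq_iff (by simp [Real.pi_ne_zero])]; ring
    rw [this]; simp
  have := mem_range_of_exists_le_of_exists_ge (c := (-1/2 : ℝ)) hk
    ⟨2 * Real.pi, by rw [h1]; norm_num⟩ ⟨0, by rw [h0]; norm_num⟩
  obtain ⟨θ, hθ⟩ := this
  obtain ⟨n, hn⟩ := hint θ
  have : (2 * n : ℝ) = -1 := by rw [← hn, hθ]; norm_num
  have : (2 * n : ℤ) = -1 := by exact_mod_cast this
  omega

lemma unbounded_of_log {E : Set ℂ} (hE : IsCompact E) {w : ℂ} (hw : w ∉ E)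
    (h : ∃ g : C(E, ℂ), ∀ s : E, (s : ℂ) - w = Complex.exp (g s)) :
    ¬ Bornology.IsBounded (connectedComponentIn Eᶜ w) := by
  intro hb
  obtain ⟨g, hg⟩ := h
  obtain ⟨G, hG⟩ := g.exists_restrict_eq hE.isClosed
  have hGE : ∀ z ∈ E, z - w = Complex.exp (G z) := by
    intro z hz
    rw [hg ⟨z, hz⟩, ← hG]; rfl
  set U := connectedComponentIn Eᶜ w with hU
  have hwU : w ∈ U := mem_connectedComponentIn hw
  have hfr : frontier U ⊆ E := by
    have := frontier_comp_subset hE.isClosed.isOpen_compl w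
    rwa [compl_compl] at this
  classical
  let F : ℂ → ℂ := fun z => if z ∈ U then Complex.exp (G z) else z - w
  have hF : Continuous F := by
    refine Continuous.if (fun z hz => ?_) (by fun_prop) (by fun_prop)
    exact (hGE z (hfr hz)).symm
  have hF0 : ∀ z, F z ≠ 0 := by
    intro z
    by_cases hz : z ∈ U
    · simp [F, hz]
    · simp only [F, hz, if_false]
      intro h0
      rw [sub_eq_zero.1 h0] at hz
      exact hz hwU
  obtain ⟨R, hRpos, hR⟩ := hb.subset_ball_lt 0 w
  let S := sphere (0 : ℂ) 1
  let Φ : ℝ → C(S, ℂ) := fun t => ⟨fun s => F (w + t * R * (s : ℂ)), by fun_prop⟩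
  have hΦ : Continuous Φ := by
    apply ContinuousMap.continuous_of_continuous_uncurry
    show Continuous (fun p : ℝ × S => F (w + p.1 * R * (p.2 : ℂ)))
    fun_prop
  obtain ⟨l, hl⟩ := log_path (isPreconnected_univ (α := ℝ)) Φ hΦ.continuousOn
    (fun t _ s => hF0 _) (mem_univ 0) (mem_univ 1)
    ⟨ContinuousMap.const _ (Complex.log (F w)), fun s => by
      simp [Φ, Complex.exp_log (hF0 w)]⟩
  have hmem : ∀ θ : ℝ, Complex.exp (θ * Complex.I) ∈ S := fun θ => by
    simp [S, Complex.norm_exp_ofReal_mul_I]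
  refine no_circle_log hRpos ⟨fun θ : ℝ => l ⟨Complex.exp (θ * Complex.I), hmem θ⟩,
    l.continuous.comp (Continuous.subtype_mk (by fun_prop) _)⟩ ?_ ?_
  · simp
  · intro θ
    have := hl ⟨_, hmem θ⟩
    refine Eq.trans ?_ this
    have hnot : w + R * Complex.exp (θ * Complex.I) ∉ U := by
      intro hin
      have := hR hin
      simp [Complex.norm_exp_ofReal_mul_I, abs_of_pos hRpos] at this
    simp [Φ, F, hnot]

lemma log_union {X Y : Set ℂ} (hX : IsClosed X) (hY : IsClosed Y) (hd : Disjoint X Y) {w : ℂ}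
    (h1 : ∃ g : C(X, ℂ), ∀ s : X, (s : ℂ) - w = Complex.exp (g s))
    (h2 : ∃ g : C(Y, ℂ), ∀ s : Y, (s : ℂ) - w = Complex.exp (g s)) :
    ∃ g : C((X ∪ Y : Set ℂ), ℂ), ∀ s : (X ∪ Y : Set ℂ), (s : ℂ) - w = Complex.exp (g s) := by
  classical
  obtain ⟨g1, hg1⟩ := h1
  obtain ⟨g2, hg2⟩ := h2
  obtain ⟨G1, hG1⟩ := g1.exists_restrict_eq hX
  obtain ⟨G2, hG2⟩ := g2.exists_restrict_eq hY
  let g : ℂ → ℂ := fun z => if z ∈ X then G1 z else G2 z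
  have hgX : EqOn g G1 X := fun z hz => by simp [g, hz]
  have hgY : EqOn g G2 Y := fun z hz => by simp [g, disjoint_right.1 hd hz]
  have hc : ContinuousOn g (X ∪ Y) :=
    (G1.continuous.continuousOn.congr hgX).union_of_isClosed
      (G2.continuous.continuousOn.congr hgY) hX hY
  refine ⟨⟨fun s => g s, continuousOn_iff_continuous_domRestrict.1 hc⟩, ?_⟩
  rintro ⟨z, hz | hz⟩
  · show z - w = Complex.exp (g z)
    rw [hgX hz, hg1 ⟨z, hz⟩, ← hG1]; rfl
  · show z - w = Complex.exp (g z)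
    rw [hgY hz, hg2 ⟨z, hz⟩, ← hG2]; rfl

def dbarOp (h : ℂ → ℂ) (w : ℂ) : ℂ := (fderiv ℝ h w 1 + Complex.I * fderiv ℝ h w Complex.I) / 2

lemma dbarOp_polar (L : ℂ →L[ℝ] ℂ) (θ : ℝ) (e : ℂ) (he : e = Complex.exp (θ * Complex.I)) :
    (L 1 + Complex.I * L Complex.I) / e = L e + Complex.I * L (Complex.I * e) := by
  have h1 : e = Real.cos θ + Real.sin θ * Complex.I := by
    rw [he, Complex.exp_mul_I]; simp
  have hL : ∀ a b : ℝ, L (a + b * Complex.I) = a * L 1 + b * L Complex.I := by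
    intro a b
    have : (a + b * Complex.I : ℂ) = a • (1 : ℂ) + b • Complex.I := by simp
    rw [this, map_add, map_smul, map_smul]; simp
  have h2 : Complex.I * e = ((-Real.sin θ : ℝ) : ℂ) + (Real.cos θ : ℝ) * Complex.I := by
    rw [h1]; push_cast; ring_nf; simp; ring
  have hne : e ≠ 0 := by rw [he]; exact Complex.exp_ne_zero _
  rw [div_eq_iff hne, h2, hL]
  nth_rewrite 1 [h1]
  rw [hL, h1]
  push_cast
  have hI := Complex.I_sq
  have hcs := Complex.cos_sq_add_sin_sq (θ : ℂ)
  linear_combination (-(L 1 + Complex.I * L Complex.I)) * hcs +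
    (Complex.sin θ ^ 2 * L 1 - Complex.cos θ * Complex.sin θ * L Complex.I) * hI

lemma pompeiu (h : ℂ → ℂ) (hh : ContDiff ℝ 1 h) (hs : HasCompactSupport h) (z : ℂ) :
    ∫ w, dbarOp h w / (w - z) = - Real.pi * h z := by
  have hd : Differentiable ℝ h := hh.differentiable (by norm_num)
  have hcf : Continuous (fderiv ℝ h) := hh.continuous_fderiv (by norm_num)
  have hsf : HasCompactSupport (fderiv ℝ h) := hs.fderiv ℝ
  obtain ⟨R, hRpos, hR⟩ := (hsf.isCompact.isBounded.union hs.isCompact.isBounded).subset_ball_lt 0 z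
  let e : ℝ → ℂ := fun θ => Complex.exp (θ * Complex.I)
  have hec : Continuous e := by fun_prop
  have hnorm : ∀ r θ : ℝ, ‖(r : ℂ) * e θ‖ = |r| := fun r θ => by
    simp [e, Complex.norm_exp_ofReal_mul_I]
  have hout : ∀ r θ : ℝ, R < r → fderiv ℝ h (z + r * e θ) = 0 ∧ h (z + r * e θ) = 0 := by
    intro r θ hr
    have hn : z + r * e θ ∉ ball z R := by
      simp only [mem_ball, dist_eq_norm, add_sub_cancel_left, hnorm, not_lt]
      exact hr.le.trans (le_abs_self r)
    constructor
    · by_contra hne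
      exact hn (hR (Or.inl (subset_tsupport _ hne)))
    · by_contra hne
      exact hn (hR (Or.inr (subset_tsupport _ hne)))
  let A : ℝ × ℝ → ℂ := fun p => fderiv ℝ h (z + p.1 * e p.2) (e p.2)
  let B : ℝ × ℝ → ℂ := fun p => fderiv ℝ h (z + p.1 * e p.2) (Complex.I * e p.2)
  have hAc : Continuous A := by
    apply Continuous.clm_apply (hcf.comp (by fun_prop)) (by fun_prop)
  have hBc : Continuous B := by
    apply Continuous.clm_apply (hcf.comp (by fun_prop)) (by fun_prop)
  have hint : ∀ F : ℝ × ℝ → ℂ, Continuous F → (∀ p : ℝ × ℝ, R < p.1 → F p = 0) →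
      IntegrableOn F (Ioi (0:ℝ) ×ˢ Ioo (-Real.pi) Real.pi) := by
    intro F hF hF0
    have h1 : IntegrableOn F (Icc (0:ℝ) R ×ˢ Icc (-Real.pi) Real.pi) :=
      hF.continuousOn.integrableOn_compact (isCompact_Icc.prod isCompact_Icc)
    refine h1.of_forall_sdiff_eq_zero (measurableSet_Ioi.prod measurableSet_Ioo) ?_
    rintro ⟨r, θ⟩ ⟨⟨hr, hθ⟩, hn⟩
    apply hF0
    by_contra hle
    exact hn ⟨⟨le_of_lt hr, not_lt.1 hle⟩, Ioo_subset_Icc_self hθ⟩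
  have hAi := hint A hAc (fun p hp => by simp [A, (hout p.1 p.2 hp).1])
  have hBi := hint B hBc (fun p hp => by simp [B, (hout p.1 p.2 hp).1])
  have hIA : ∫ p in Ioi (0:ℝ) ×ˢ Ioo (-Real.pi) Real.pi, A p = - (2 * Real.pi) * h z := by
    have : ∫ p in Ioi (0:ℝ) ×ˢ Ioo (-Real.pi) Real.pi, A p =
        ∫ θ in Ioo (-Real.pi) Real.pi, ∫ r in Ioi (0:ℝ), A (r, θ) := by
      rw [IntegrableOn, Measure.volume_eq_prod, ← Measure.prod_restrict] at hAi
      rw [Measure.volume_eq_prod, ← Measure.prod_restrict, integral_prod_symm _ hAi]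
    rw [this]
    have hin : ∀ θ : ℝ, ∫ r in Ioi (0:ℝ), A (r, θ) = - h z := by
      intro θ
      have hder : ∀ r : ℝ, HasDerivAt (fun r : ℝ => h (z + r * e θ)) (A (r, θ)) r := by
        intro r
        have h1 : HasDerivAt (fun r : ℝ => z + r * e θ) (e θ) r := by
          simpa using ((Complex.ofRealCLM.hasDerivAt (x := r)).mul_const (e θ)).const_add z
        exact (hd _).hasFDerivAt.comp_hasDerivAt r h1
      have hio : IntegrableOn (fun r : ℝ => A (r, θ)) (Ioi 0) := by
        have h1 : IntegrableOn (fun r : ℝ => A (r, θ)) (Icc 0 R) :=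
          (by fun_prop : Continuous (fun r : ℝ => A (r, θ))).continuousOn.integrableOn_compact
            isCompact_Icc
        refine h1.of_forall_sdiff_eq_zero measurableSet_Ioi ?_
        rintro r ⟨hr, hn⟩
        have : R < r := by
          by_contra hle
          exact hn ⟨le_of_lt hr, not_lt.1 hle⟩
        simp [A, (hout r θ this).1]
      rw [integral_Ioi_of_hasDerivAt_of_tendsto' (m := 0) (fun r _ => hder r) hio]
      · simp
      · apply tendsto_const_nhds.congr'
        filter_upwards [eventually_gt_atTop R] with r hr
        exact (hout r θ hr).2.symm
    simp only [hin]
    rw [setIntegral_const, measureReal_def, Real.volume_Ioo,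
      ENNReal.toReal_ofReal (by linarith [Real.pi_pos])]
    rw [Complex.real_smul]
    push_cast
    ring
  have hIB : ∫ p in Ioi (0:ℝ) ×ˢ Ioo (-Real.pi) Real.pi, B p = 0 := by
    rw [Measure.volume_eq_prod] at hBi ⊢
    rw [setIntegral_prod _ hBi]
    refine (setIntegral_congr_fun (g := fun _ => 0) measurableSet_Ioi ?_).trans (by simp)
    intro r hr
    have hr0 : (r : ℂ) ≠ 0 := by exact_mod_cast (ne_of_gt hr)
    have hder : ∀ θ : ℝ, HasDerivAt (fun θ : ℝ => h (z + r * e θ)) (r * B (r, θ)) θ := by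
      intro θ
      have h0 : HasDerivAt e (e θ * Complex.I) θ := by
        have := ((Complex.ofRealCLM.hasDerivAt (x := θ)).mul_const Complex.I).cexp
        simpa [e] using this
      have h1 : HasDerivAt (fun θ : ℝ => z + r * e θ) (r * (e θ * Complex.I)) θ :=
        (h0.const_mul (r : ℂ)).const_add z
      have h2 := (hd _).hasFDerivAt.comp_hasDerivAt θ h1
      have : (r : ℂ) * (e θ * Complex.I) = r • (Complex.I * e θ) := by
        rw [Complex.real_smul]; ring
      rw [this, map_smul, Complex.real_smul] at h2
      exact h2
    have hc : Continuous (fun θ : ℝ => (r : ℂ) * B (r, θ)) := by fun_prop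
    have := intervalIntegral.integral_eq_sub_of_hasDerivAt (a := -Real.pi) (b := Real.pi)
      (fun θ _ => hder θ) (hc.intervalIntegrable _ _)
    have hee : e Real.pi = e (-Real.pi) := by
      simp only [e]
      rw [Complex.exp_eq_exp_iff_exists_int]
      exact ⟨1, by push_cast; ring⟩
    rw [hee, sub_self, intervalIntegral.integral_const_mul, mul_eq_zero, or_iff_right hr0,
      intervalIntegral.integral_of_le (by linarith [Real.pi_pos]), integral_Ioc_eq_integral_Ioo] at this
    exact this
  calc ∫ w, dbarOp h w / (w - z) = ∫ u, dbarOp h (z + u) / u := by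
        rw [← integral_add_left_eq_self _ z]; simp
    _ = ∫ p in polarCoord.target, p.1 • (dbarOp h (z + Complex.polarCoord.symm p) /
          Complex.polarCoord.symm p) := (Complex.integral_comp_polarCoord_symm
            (fun u => dbarOp h (z + u) / u)).symm
    _ = ∫ p in Ioi (0:ℝ) ×ˢ Ioo (-Real.pi) Real.pi, ((1/2 : ℂ) * A p + (Complex.I / 2) * B p) := by
        rw [polarCoord_target]
        refine setIntegral_congr_fun (measurableSet_Ioi.prod measurableSet_Ioo) ?_
        rintro ⟨r, θ⟩ ⟨hr, hθ⟩
        have hr0 : (r : ℂ) ≠ 0 := by exact_mod_cast (ne_of_gt hr)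
        have hp : Complex.polarCoord.symm (r, θ) = r * e θ := by
          simp [e, Complex.exp_mul_I]
        have := dbarOp_polar (fderiv ℝ h (z + r * e θ)) θ (e θ) rfl
        have he0 : e θ ≠ 0 := Complex.exp_ne_zero _
        simp only [hp, dbarOp, A, B, Complex.real_smul]
        rw [div_eq_iff he0] at this
        rw [this]
        field_simp
    _ = _ := by
        rw [integral_add (hAi.const_mul _) (hBi.const_mul _), integral_const_mul,
          integral_const_mul, hIA, hIB]
        ring

section RungePart
open scoped ContDiff Manifold

variable {E : Set ℂ}

/-- The coordinate function on `E`. -/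
def coordFn (E : Set ℂ) : C(E, ℂ) := ⟨fun s => (s : ℂ), continuous_subtype_val⟩

/-- The coordinate function as an element of the closed algebra it generates. -/
def coordElt (E : Set ℂ) [CompactSpace E] : Algebra.elemental ℂ (coordFn E) :=
  ⟨coordFn E, Algebra.elemental.self_mem ℂ _⟩

lemma approx_elemental [CompactSpace E] (a : Algebra.elemental ℂ (coordFn E)) {ε : ℝ}
    (hε : 0 < ε) : ∃ p : Polynomial ℂ, ∀ s : E, ‖p.eval (s : ℂ) - (a : C(E, ℂ)) s‖ < ε := by
  have ha : (a : C(E, ℂ)) ∈ closure (Algebra.adjoin ℂ {coordFn E} : Set C(E, ℂ)) :=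
    a.2
  obtain ⟨b, hb, hab⟩ := Metric.mem_closure_iff.1 ha ε hε
  rw [SetLike.mem_coe, Algebra.adjoin_singleton_eq_range_aeval] at hb
  obtain ⟨p, rfl⟩ := hb
  refine ⟨p, fun s => ?_⟩
  have h1 : (Polynomial.aeval (coordFn E) p : C(E, ℂ)) s = p.eval (s : ℂ) := by
    have := Polynomial.aeval_algHom_apply (ContinuousMap.evalAlgHom ℂ ℂ s) (coordFn E) p
    rw [← Polynomial.coe_aeval_eq_eval]
    exact this.symm
  rw [← h1, ← dist_eq_norm, dist_comm]
  exact (ContinuousMap.dist_apply_le_dist s).trans_lt hab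

lemma spectrum_coordElt [CompactSpace E]
    (hunb : ∀ w ∉ E, ¬ Bornology.IsBounded (connectedComponentIn Eᶜ w)) :
    spectrum ℂ (coordElt E) ⊆ E := by
  intro w hw
  by_contra hwE
  have hcl : IsClosed (Algebra.elemental ℂ (coordFn E) : Set C(E, ℂ)) :=
    Subalgebra.isClosed_topologicalClosure _
  have := hcl
  have h1 := Subalgebra.spectrum_isBounded_connectedComponentIn
    (Algebra.elemental ℂ (coordFn E)) (coordElt E) hw
  have h2 : spectrum ℂ ((coordElt E : Algebra.elemental ℂ (coordFn E)) : C(E, ℂ)) = E := by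
    rw [ContinuousMap.spectrum_eq_range]
    show range (fun s : E => (s : ℂ)) = E
    simp
  rw [h2] at h1
  exact hunb w hwE h1

lemma resolvent_coordElt_apply [CompactSpace E] {w : ℂ} (hw : w ∉ spectrum ℂ (coordElt E)) (s : E) :
    ((resolvent (coordElt E) w : Algebra.elemental ℂ (coordFn E)) : C(E, ℂ)) s
      * (w - (s : ℂ)) = 1 := by
  have hu : IsUnit (algebraMap ℂ _ w - coordElt E) := spectrum.notMem_iff.1 hw
  have := Ring.inverse_mul_cancel _ hu
  have h2 := congrArg (fun a : Algebra.elemental ℂ (coordFn E) => (a : C(E, ℂ)) s) this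
  exact h2

lemma poly_separate (hE : IsCompact E)
    (hunb : ∀ w ∉ E, ¬ Bornology.IsBounded (connectedComponentIn Eᶜ w)) {w : ℂ} (hw : w ∉ E) :
    ∃ p : Polynomial ℂ, p.eval w = 1 ∧ ∀ z ∈ E, ‖p.eval z‖ ≤ 1 / 2 := by
  have := isCompact_iff_compactSpace.1 hE
  have hw' : w ∉ spectrum ℂ (coordElt E) := fun h => hw (spectrum_coordElt hunb h)
  obtain ⟨R, hRpos, hR⟩ := hE.isBounded.subset_ball_lt 0 w
  obtain ⟨q, hq⟩ := approx_elemental (resolvent (coordElt E) w) (ε := 1 / (2 * R)) (by positivity)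
  refine ⟨1 - q * (Polynomial.C w - Polynomial.X), by simp, fun z hz => ?_⟩
  have h1 := resolvent_coordElt_apply hw' ⟨z, hz⟩
  have h2 := hq ⟨z, hz⟩
  set t := ((resolvent (coordElt E) w : Algebra.elemental ℂ (coordFn E)) : C(E, ℂ)) ⟨z, hz⟩
  have h3 : (1 - q * (Polynomial.C w - Polynomial.X)).eval z = -((q.eval z - t) * (w - z)) := by
    simp only [Polynomial.eval_sub, Polynomial.eval_one, Polynomial.eval_mul, Polynomial.eval_C,
      Polynomial.eval_X]
    simp only at h1
    rw [← h1]; ring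
  have h4 : ‖w - z‖ ≤ R := by
    have := hR hz
    rw [mem_ball, dist_comm, dist_eq_norm] at this
    exact this.le
  rw [h3, norm_neg, norm_mul]
  calc _ ≤ 1 / (2 * R) * R := by gcongr
    _ = 1 / 2 := by field_simp

lemma exists_bump {X Y : Set ℂ} (hX : IsCompact X) (hY : IsCompact Y) (hd : Disjoint X Y) :
    ∃ h : ℂ → ℂ, ContDiff ℝ 1 h ∧ HasCompactSupport h ∧ (∀ z ∈ X, h =ᶠ[𝓝 z] fun _ => 1) ∧
      (∀ z ∈ Y, h =ᶠ[𝓝 z] fun _ => 0) := by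
  obtain ⟨R, hR⟩ := hX.isBounded.subset_ball 0
  have hs : IsClosed (Y ∪ (ball (0:ℂ) R)ᶜ) := hY.isClosed.union isOpen_ball.isClosed_compl
  have hdis : Disjoint (Y ∪ (ball (0:ℂ) R)ᶜ) X := by
    rw [disjoint_union_left]
    exact ⟨hd.symm, disjoint_compl_left_iff_subset.2 hR⟩
  obtain ⟨f, h0, h1, -⟩ := exists_contMDiffMap_zero_one_nhds_of_isClosed 𝓘(ℝ, ℂ) (n := 1)
    hs hX.isClosed hdis
  have hfc : ContDiff ℝ 1 f := f.contMDiff.contDiff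
  rw [eventually_nhdsSet_iff_forall] at h0 h1
  refine ⟨fun z => (f z : ℂ), Complex.ofRealCLM.contDiff.comp hfc, ?_, ?_, ?_⟩
  · refine HasCompactSupport.intro (isCompact_closedBall (0:ℂ) R) (fun z hz => ?_)
    have : z ∈ Y ∪ (ball (0:ℂ) R)ᶜ := Or.inr (fun h => hz (ball_subset_closedBall h))
    simp [(h0 z this).self_of_nhds]
  · intro z hz
    filter_upwards [h1 z hz] with y hy
    simp [hy]
  · intro z hz
    filter_upwards [h0 z (Or.inl hz)] with y hy
    simp [hy]

lemma dbarOp_zero {h : ℂ → ℂ} {z c : ℂ} (hz : h =ᶠ[𝓝 z] fun _ => c) :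
    ∀ᶠ w in 𝓝 z, dbarOp h w = 0 := by
  filter_upwards [hz.eventuallyEq_nhds] with w hw
  simp [dbarOp, hw.fderiv_eq]

lemma poly_idem {X Y : Set ℂ} (hX : IsCompact X) (hY : IsCompact Y) (hd : Disjoint X Y)
    (hunb : ∀ w ∉ X ∪ Y, ¬ Bornology.IsBounded (connectedComponentIn (X ∪ Y)ᶜ w))
    {ε : ℝ} (hε : 0 < ε) :
    ∃ p : Polynomial ℂ, (∀ z ∈ X, ‖p.eval z - 1‖ < ε) ∧ (∀ z ∈ Y, ‖p.eval z‖ < ε) := by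
  have hE := hX.union hY
  set E := X ∪ Y with hEdef
  have := isCompact_iff_compactSpace.1 hE
  have hspec := spectrum_coordElt hunb
  obtain ⟨h, hh, hs, h1, h0⟩ := exists_bump hX hY hd
  have hcl : IsClosed (Algebra.elemental ℂ (coordFn E) : Set C(E, ℂ)) :=
    Subalgebra.isClosed_topologicalClosure _
  have hcomp : CompleteSpace (Algebra.elemental ℂ (coordFn E)) := hcl.completeSpace_coe
  have hzero : ∀ z ∈ E, ∀ᶠ w in 𝓝 z, dbarOp h w = 0 := by
    rintro z (hz | hz)
    · exact dbarOp_zero (h1 z hz)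
    · exact dbarOp_zero (h0 z hz)
  have hcf : Continuous (fderiv ℝ h) := hh.continuous_fderiv (by norm_num)
  have hdc : Continuous (dbarOp h) := by
    unfold dbarOp
    fun_prop
  have hds : HasCompactSupport (dbarOp h) := by
    refine (hs.fderiv ℝ).mono ?_
    intro w hw hw0
    apply hw
    simp [dbarOp, hw0]
  let φ : ℂ → Algebra.elemental ℂ (coordFn E) := fun w => dbarOp h w • resolvent (coordElt E) w
  have hφc : Continuous φ := by
    rw [continuous_iff_continuousAt]
    intro w
    by_cases hw : w ∈ spectrum ℂ (coordElt E)
    · have : φ =ᶠ[𝓝 w] fun _ => 0 := by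
        filter_upwards [hzero w (hspec hw)] with v hv
        simp [φ, hv]
      exact (continuousAt_const).congr this.symm
    · have := (spectrum.hasDerivAt_resolvent_const_left (a := coordElt E) (k := w)
        (spectrum.mem_resolventSet_iff.2 (spectrum.notMem_iff.1 hw))).continuousAt
      exact hdc.continuousAt.smul this
  have hφs : HasCompactSupport φ := hds.smul_right
  have hφi : Integrable φ := hφc.integrable_of_hasCompactSupport hφs
  let a : Algebra.elemental ℂ (coordFn E) := (-(Real.pi : ℂ)⁻¹) • ∫ w, φ w
  have ha : ∀ s : E, (a : C(E, ℂ)) s = h s := by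
    intro s
    let ℓ : Algebra.elemental ℂ (coordFn E) →L[ℂ] ℂ :=
      (ContinuousMap.evalCLM ℂ s).comp
        (Algebra.elemental ℂ (coordFn E)).toSubmodule.subtypeL
    have hℓ : ∀ b : Algebra.elemental ℂ (coordFn E), ℓ b = (b : C(E, ℂ)) s := fun b => rfl
    rw [← hℓ]
    simp only [a, map_smul]
    rw [← ℓ.integral_comp_comm hφi]
    have : ∀ w, ℓ (φ w) = dbarOp h w / (w - s) := by
      intro w
      have hsm : ℓ (φ w) = dbarOp h w *
          ((resolvent (coordElt E) w : Algebra.elemental ℂ (coordFn E)) : C(E, ℂ)) s := rfl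
      rw [hsm]
      by_cases hw : w ∈ spectrum ℂ (coordElt E)
      · simp [(hzero w (hspec hw)).self_of_nhds]
      · have := resolvent_coordElt_apply hw s
        rw [eq_div_iff (right_ne_zero_of_mul_eq_one this), mul_assoc, this, mul_one]
    simp only [this]
    rw [pompeiu h hh hs]
    have : (Real.pi : ℂ) ≠ 0 := by exact_mod_cast Real.pi_ne_zero
    simp only [smul_eq_mul]
    field_simp
  obtain ⟨p, hp⟩ := approx_elemental a hε
  refine ⟨p, fun z hz => ?_, fun z hz => ?_⟩
  · have := hp ⟨z, Or.inl hz⟩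
    rwa [ha, (h1 z hz).self_of_nhds] at this
  · have := hp ⟨z, Or.inr hz⟩
    rw [ha, (h0 z hz).self_of_nhds] at this
    simpa using this

end RungePart

section HullPart

lemma le_biSup_real {α : Type*} {K : Set α} {g : α → ℝ} {B : ℝ}
    (hB : ∀ w ∈ K, g w ≤ B) {w : α} (hw : w ∈ K) : g w ≤ ⨆ w ∈ K, g w := by
  have hbdd : BddAbove (range fun v => ⨆ (_ : v ∈ K), g v) := by
    refine ⟨max B 0, ?_⟩
    rintro _ ⟨v, rfl⟩
    by_cases hv : v ∈ K
    · simp only [hv, ciSup_unique]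
      exact (hB v hv).trans (le_max_left _ _)
    · simp [hv]
  refine le_trans ?_ (le_ciSup hbdd w)
  simp [hw]

lemma biSup_real_le {α : Type*} {K : Set α} {g : α → ℝ} {C : ℝ} (hC : 0 ≤ C)
    (hB : ∀ w ∈ K, g w ≤ C) : ⨆ w ∈ K, g w ≤ C :=
  Real.iSup_le (fun v => Real.iSup_le (fun hv => hB v hv) hC) hC

lemma mem_holHull_iff {N : ℕ} {D K : Set (EN N)} (hK : IsCompact K) (hKD : K ⊆ D) (z : EN N) :
    z ∈ holHull D K ↔ z ∈ D ∧ ∀ φ : EN N → ℂ, DifferentiableOn ℂ φ D → ∀ C : ℝ, 0 ≤ C →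
      (∀ w ∈ K, ‖φ w‖ ≤ C) → ‖φ z‖ ≤ C := by
  constructor
  · rintro ⟨hz, h⟩
    exact ⟨hz, fun φ hφ C hC hb => (h φ hφ).trans (biSup_real_le hC hb)⟩
  · rintro ⟨hz, h⟩
    refine ⟨hz, fun φ hφ => ?_⟩
    obtain ⟨B, hB⟩ := hK.exists_bound_of_continuousOn (hφ.continuousOn.mono hKD)
    exact h φ hφ _ (Real.iSup_nonneg fun v => Real.iSup_nonneg fun _ => norm_nonneg _)
      (fun w hw => le_biSup_real (g := fun w => ‖φ w‖) hB hw)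

lemma mem_polyHull1_iff {F : Set ℂ} (hF : IsCompact F) (z : ℂ) :
    z ∈ polyHull1 F ↔ ∀ p : Polynomial ℂ, ∀ C : ℝ, 0 ≤ C →
      (∀ w ∈ F, ‖p.eval w‖ ≤ C) → ‖p.eval z‖ ≤ C := by
  constructor
  · intro h p C hC hb
    exact (h p).trans (biSup_real_le hC hb)
  · intro h p
    obtain ⟨B, hB⟩ := hF.exists_bound_of_continuousOn p.continuous.continuousOn
    exact h p _ (Real.iSup_nonneg fun v => Real.iSup_nonneg fun _ => norm_nonneg _)
      (fun w hw => le_biSup_real (g := fun w => ‖p.eval w‖) hB hw)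

lemma subset_polyHull1 {F : Set ℂ} (hF : IsCompact F) : F ⊆ polyHull1 F := fun z hz =>
  (mem_polyHull1_iff hF z).2 fun _ _ _ hb => hb z hz

lemma isCompact_polyHull1 {F : Set ℂ} (hF : IsCompact F) : IsCompact (polyHull1 F) := by
  refine Metric.isCompact_of_isClosed_isBounded ?_ ?_
  · have : polyHull1 F = ⋂ p : Polynomial ℂ, {z | ‖p.eval z‖ ≤ ⨆ w ∈ F, ‖p.eval w‖} := by
      ext z; simp [polyHull1]
    rw [this]
    exact isClosed_iInter fun p => isClosed_le p.continuous.norm continuous_const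
  · refine Metric.isBounded_closedBall (x := (0:ℂ)) (r := ⨆ w ∈ F, ‖w‖) |>.subset ?_
    intro z hz
    have := hz Polynomial.X
    simpa using this

lemma unbounded_polyHull1 {F : Set ℂ} (hF : IsCompact F) {w : ℂ} (hw : w ∉ polyHull1 F) :
    ¬ Bornology.IsBounded (connectedComponentIn (polyHull1 F)ᶜ w) := by
  intro hb
  apply hw
  rw [mem_polyHull1_iff hF]
  intro p C hC hp
  have hfr := frontier_comp_subset (isCompact_polyHull1 hF).isClosed.isOpen_compl w
  rw [compl_compl] at hfr
  exact Complex.norm_le_of_forall_mem_frontier_norm_le hb p.differentiable.diffContOnCl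
    (fun z hz => (mem_polyHull1_iff hF z).1 (hfr hz) p C hC hp)
    (subset_closure (mem_connectedComponentIn hw))

lemma unbounded_union {F G : Set ℂ} (hF : IsCompact F) (hG : IsCompact G)
    (hd : Disjoint (polyHull1 F) (polyHull1 G)) :
    ∀ w ∉ polyHull1 F ∪ polyHull1 G,
      ¬ Bornology.IsBounded (connectedComponentIn (polyHull1 F ∪ polyHull1 G)ᶜ w) := by
  intro w hw
  have hX := isCompact_polyHull1 hF
  have hY := isCompact_polyHull1 hG
  rw [mem_union, not_or] at hw
  refine unbounded_of_log (hX.union hY) (by simp [hw]) ?_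
  exact log_union hX.isClosed hY.isClosed hd
    (log_of_unbounded hX (unbounded_polyHull1 hF hw.1) hw.1)
    (log_of_unbounded hY (unbounded_polyHull1 hG hw.2) hw.2)

lemma poly_comp_diff {N : ℕ} {D : Set (EN N)} {f : EN N → ℂ} (hf : DifferentiableOn ℂ f D)
    (p : Polynomial ℂ) : DifferentiableOn ℂ (fun z => p.eval (f z)) D :=
  p.differentiable.comp_differentiableOn hf

/-- The analytic half: a point of the hull of `K ∪ L` whose image is in the hull of `f(K)` belongs
to the hull of `K`. -/
lemma hull_half {N : ℕ} {D K L : Set (EN N)} (hK : IsCompact K) (hKD : K ⊆ D) (hL : IsCompact L)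
    (hLD : L ⊆ D) {f : EN N → ℂ} (hf : DifferentiableOn ℂ f D) {X Y : Set ℂ}
    (hKX : ∀ w ∈ K, f w ∈ X) (hLY : ∀ w ∈ L, f w ∈ Y)
    (hp : ∀ ε : ℝ, 0 < ε → ∃ p : Polynomial ℂ,
      (∀ z ∈ X, ‖p.eval z - 1‖ < ε) ∧ (∀ z ∈ Y, ‖p.eval z‖ < ε))
    {z : EN N} (hz : z ∈ holHull D (K ∪ L)) (hfz : f z ∈ X) : z ∈ holHull D K := by
  rw [mem_holHull_iff (hK.union hL) (union_subset hKD hLD)] at hz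
  rw [mem_holHull_iff hK hKD]
  refine ⟨hz.1, fun φ hφ C hC hb => ?_⟩
  by_contra! hlt
  have hpos : 0 < ‖φ z‖ := hC.trans_lt hlt
  obtain ⟨B, hB⟩ := hL.exists_bound_of_continuousOn (hφ.continuousOn.mono hLD)
  have hq : C / ‖φ z‖ < 1 := (div_lt_one hpos).2 hlt
  obtain ⟨m, hm⟩ := exists_pow_lt_of_lt_one (show (0:ℝ) < 1 / 4 by norm_num) hq
  have hm' : C ^ m < ‖φ z‖ ^ m / 4 := by
    rw [div_pow, div_lt_iff₀ (by positivity)] at hm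
    linarith
  set P := ‖φ z‖ ^ m with hP
  have hPpos : 0 < P := by positivity
  set ε := min (1 / 4) (P / (4 * (|B| ^ m + 1))) with hε
  have hεpos : 0 < ε := by positivity
  obtain ⟨p, hp1, hp2⟩ := hp ε hεpos
  have h14 : ε ≤ 1 / 4 := min_le_left _ _
  have hεB : ε * |B| ^ m ≤ P / 4 := by
    calc ε * |B| ^ m ≤ P / (4 * (|B| ^ m + 1)) * (|B| ^ m + 1) := by
          gcongr
          · exact min_le_right _ _
          · linarith
      _ = P / 4 := by
          have : |B| ^ m + 1 ≠ 0 := by positivity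
          field_simp
  have key := hz.2 (fun w => φ w ^ m * p.eval (f w)) ((hφ.pow m).mul (poly_comp_diff hf p))
    (P * (5 / 16)) (by positivity) ?_
  · simp only [norm_mul, norm_pow] at key
    have h1 : 3 / 4 ≤ ‖p.eval (f z)‖ := by
      have h2 := hp1 _ hfz
      have h3 := norm_sub_norm_le (1 : ℂ) (p.eval (f z))
      rw [norm_sub_rev, norm_one] at h3
      linarith
    have : P * (3 / 4) ≤ P * (5 / 16) := by
      refine le_trans ?_ key
      gcongr
    linarith
  · rintro w (hw | hw)
    · simp only [norm_mul, norm_pow]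
      have h1 : ‖p.eval (f w)‖ ≤ 5 / 4 := by
        have h2 := hp1 _ (hKX w hw)
        have h3 := norm_sub_norm_le (p.eval (f w)) 1
        rw [norm_one] at h3
        linarith
      calc ‖φ w‖ ^ m * ‖p.eval (f w)‖ ≤ C ^ m * (5 / 4) := by
            gcongr
            exact hb w hw
        _ ≤ P / 4 * (5 / 4) := by gcongr
        _ = P * (5 / 16) := by ring
    · simp only [norm_mul, norm_pow]
      calc ‖φ w‖ ^ m * ‖p.eval (f w)‖ ≤ |B| ^ m * ε := by
            gcongr
            · exact (hB w hw).trans (le_abs_self B)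
            · exact (hp2 _ (hLY w hw)).le
        _ = ε * |B| ^ m := by ring
        _ ≤ P / 4 := hεB
        _ ≤ P * (5 / 16) := by linarith

lemma holHull_mono' {N : ℕ} {D K L : Set (EN N)} (hK : IsCompact K) (hKD : K ⊆ D)
    (hL : IsCompact L) (hLD : L ⊆ D) (h : K ⊆ L) : holHull D K ⊆ holHull D L := by
  intro z hz
  rw [mem_holHull_iff hK hKD] at hz
  rw [mem_holHull_iff hL hLD]
  exact ⟨hz.1, fun φ hφ C hC hb => hz.2 φ hφ C hC fun w hw => hb w (h hw)⟩

end HullPart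

end

theorem kallin_holomorphic_hulls {N : ℕ} (D : Set (EN N)) (hD : Pseudoconvex D)
    (K L : Set (EN N)) (hK : IsCompact K) (hKD : K ⊆ D) (hL : IsCompact L) (hLD : L ⊆ D)
    (f : EN N → ℂ) (hf : DifferentiableOn ℂ f D)
    (hdisj : Disjoint (polyHull1 (f '' K)) (polyHull1 (f '' L))) :
    holHull D (K ∪ L) = holHull D K ∪ holHull D L := by
  have hF : IsCompact (f '' K) := hK.image_of_continuousOn (hf.continuousOn.mono hKD)
  have hG : IsCompact (f '' L) := hL.image_of_continuousOn (hf.continuousOn.mono hLD)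
  have hX := isCompact_polyHull1 hF
  have hY := isCompact_polyHull1 hG
  have hunb := unbounded_union hF hG hdisj
  have hKX : ∀ w ∈ K, f w ∈ polyHull1 (f '' K) := fun w hw =>
    subset_polyHull1 hF (mem_image_of_mem f hw)
  have hLY : ∀ w ∈ L, f w ∈ polyHull1 (f '' L) := fun w hw =>
    subset_polyHull1 hG (mem_image_of_mem f hw)
  have hKL := hK.union hL
  have hKLD := union_subset hKD hLD
  apply Subset.antisymm
  · intro z hz
    have hfz : f z ∈ polyHull1 (f '' K) ∪ polyHull1 (f '' L) := by
      by_contra hn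
      obtain ⟨p, hp1, hp2⟩ := poly_separate (hX.union hY) hunb hn
      have := ((mem_holHull_iff hKL hKLD z).1 hz).2 _ (poly_comp_diff hf p) (1 / 2) (by norm_num) ?_
      · simp only [hp1, norm_one] at this
        norm_num at this
      · rintro w (hw | hw)
        · exact hp2 _ (Or.inl (hKX w hw))
        · exact hp2 _ (Or.inr (hLY w hw))
    rcases hfz with hfz | hfz
    · exact Or.inl (hull_half hK hKD hL hLD hf hKX hLY
        (fun ε hε => poly_idem hX hY hdisj hunb hε) hz hfz)
    · rw [union_comm] at hz
      rw [union_comm (polyHull1 (f '' K))] at hunb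
      exact Or.inr (hull_half hL hLD hK hKD hf hLY hKX
        (fun ε hε => poly_idem hY hX hdisj.symm hunb hε) hz hfz)
  · exact union_subset (holHull_mono' hK hKD hKL hKLD subset_union_left)
      (holHull_mono' hL hLD hKL hKLD subset_union_right)
end
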